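/- arXiv:2205.09941 — 3 statements merged into one kernel-verified Lean document; each statement's English description precedes it below -/
import Mathlib

section
/- Let X be a contractible metric space with zero (n+1)-dimensional Hausdorff measure. If D₁ and D₂ are two subsets of X, each homeomorphic to the closed n-dimensional ball, having the same boundary (image of Sⁿ⁻¹ under the respective homeomorphisms), then D₁=D₂. -/
open Set Metric MeasureTheory
open scoped NNReal ENNReal
open Filter Topology Polynomial Function

/-!
Suppose `f₁ p₀ ∉ D₂`, let `B` be the closed unit ball and `δ` half the distance from `f₁ p₀` to
`D₂`. Extending `f₁` on `∂B` to a map `B → D₂` by Tietze, we obtain a map of the boundary of the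
cylinder `B × [-1, 1]` that is `f₁` on the top and takes values in `D₂` on the bottom. It is
nullhomotopic, so it extends to a map `k` of the whole cylinder. Let `Φ = (c, dist(·, D₂) - δ)`,
where `c` is a Tietze extension of `f₁⁻¹`. On the boundary of the cylinder, the segments joining
`Φ ∘ k` to the identity miss `(p₀, 0)`, so by Poincaré–Bohl the image under `ψ ∘ k` of the
cylinder contains a neighbourhood of `(p₀, 0)` for every `ψ` close enough to `Φ`. By
Stone–Weierstrass `ψ` can be chosen locally Lipschitz, and then this image is null.

The topological input is the absence of a `C¹` retraction `g` of a ball onto its boundary, proved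
following Milnor and Rogers: `∫ det (1 + t D(g - id))` over the ball is polynomial in `t` and
equals the volume of the ball for small `t`, but it vanishes at `t = 1`.
-/

lemma image_eq_self_of_eqOn_id_compl {α : Type*} {f : α → α} {s : Set α} (hf : Bijective f)
    (hid : EqOn f id sᶜ) : f '' s = s := by
  rw [← compl_inj_iff, ← image_compl_eq hf, hid.image_eq, image_id]

lemma exists_mem_segment_mem_frontier {E : Type*} [AddCommGroup E] [Module ℝ E]
    [TopologicalSpace E] [ContinuousAdd E] [ContinuousSMul ℝ E] {s : Set E} {x y : E} (hx : x ∈ s)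
    (hy : y ∉ s) :
    ∃ z ∈ segment ℝ x y, z ∈ frontier s := by
  by_contra! hdisj
  have hcover : segment ℝ x y ⊆ interior s ∪ (closure s)ᶜ := fun z hz ↦
    or_iff_not_imp_left.2 fun hint hcl ↦ hdisj z hz ⟨hcl, hint⟩
  obtain ⟨z, -, hzs, hzc⟩ := (convex_segment x y).isPreconnected _ _ isOpen_interior
    isClosed_closure.isOpen_compl hcover
    ⟨x, left_mem_segment ℝ x y, (hcover (left_mem_segment ℝ x y)).resolve_right
      (not_not_intro (subset_closure hx))⟩
    ⟨y, right_mem_segment ℝ x y, (hcover (right_mem_segment ℝ x y)).resolve_left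
      fun h ↦ hy (interior_subset h)⟩
  exact hzc (subset_closure (interior_subset hzs))

lemma integral_eval_eq_of_infinite {α : Type*} [MeasurableSpace α] {μ : Measure α} {P : α → ℝ[X]}
    {m : ℕ} (hP : ∀ x, (P x).natDegree ≤ m) {S : Set ℝ} (hS : S.Infinite) {c : ℝ}
    (hint : ∀ t ∈ S, Integrable (fun x ↦ (P x).eval t) μ)
    (hc : ∀ t ∈ S, ∫ x, (P x).eval t ∂μ = c) (t : ℝ) : ∫ x, (P x).eval t ∂μ = c := by
  obtain ⟨s, hsS, hcard⟩ := hS.exists_subset_card_eq (m + 1)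
  have hinterp (x : α) :
      (P x).eval t = ∑ i ∈ s, (P x).eval i * (Lagrange.basis s id i).eval t := by
    conv_lhs => rw [Lagrange.eq_interpolate (s := s) (v := id) (f := P x) injective_id.injOn
      (degree_le_natDegree.trans_lt (by rw [hcard]; exact_mod_cast Nat.lt_succ_of_le (hP x)))]
    simp [Lagrange.interpolate_apply, eval_finsetSum]
  have hbasis : ∑ i ∈ s, (Lagrange.basis s id i).eval t = 1 := by
    rw [← eval_finsetSum, Lagrange.sum_basis injective_id.injOn
      (Finset.card_pos.1 (by omega)), eval_one]
  calc ∫ x, (P x).eval t ∂μ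
      = ∑ i ∈ s, ∫ x, (P x).eval i * (Lagrange.basis s id i).eval t ∂μ := by
        simp_rw [hinterp]
        exact integral_finsetSum _ fun i hi ↦ (hint i (hsS hi)).mul_const _
    _ = ∑ i ∈ s, c * (Lagrange.basis s id i).eval t :=
        Finset.sum_congr rfl fun i hi ↦ by rw [integral_mul_const, hc i (hsS hi)]
    _ = c := by rw [← Finset.mul_sum, hbasis, mul_one]

section
variable {E : Type*} [NormedAddCommGroup E] [NormedSpace ℝ E]

lemma bijective_id_add_of_lipschitzWith [CompleteSpace E] {h : E → E} {K : ℝ≥0}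
    (hh : LipschitzWith K h) (hK : K < 1) : Bijective (fun x ↦ x + h x) := by
  have happrox : ApproximatesLinearOn (fun x ↦ x + h x)
      (ContinuousLinearEquiv.refl ℝ E : E →L[ℝ] E) univ K := by
    refine LipschitzOnWith.approximatesLinearOn ?_
    convert hh.lipschitzOnWith using 2
    ext x
    simp
  have hnorm : Subsingleton E ∨ K < ‖((ContinuousLinearEquiv.refl ℝ E).symm : E →L[ℝ] E)‖₊⁻¹ := by
    rcases subsingleton_or_nontrivial E with hE | hE
    · exact .inl hE
    · right; simpa using hK
  exact ⟨injOn_univ.1 (happrox.injOn hnorm), happrox.surjective hnorm⟩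

lemma lipschitzWith_indicator {F : Type*} [NormedAddCommGroup F] {h : E → F} {s : Set E} {K : ℝ≥0}
    (hh : LipschitzOnWith K h (closure s)) (h0 : ∀ x ∈ frontier s, h x = 0) :
    LipschitzWith K (s.indicator h) := by
  have hmixed {x y : E} (hx : x ∈ s) (hy : y ∉ s) : dist (h x) 0 ≤ K * dist x y := by
    obtain ⟨z, hz, hzs⟩ := exists_mem_segment_mem_frontier hx hy
    calc dist (h x) 0 = dist (h x) (h z) := by rw [h0 z hzs]
      _ ≤ K * dist x z := hh.dist_le_mul x (subset_closure hx) z (frontier_subset_closure hzs)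
      _ ≤ K * dist x y := by
        gcongr
        linarith [dist_add_dist_of_mem_segment hz, dist_nonneg (x := z) (y := y)]
  refine LipschitzWith.of_dist_le_mul fun x y ↦ ?_
  by_cases hx : x ∈ s <;> by_cases hy : y ∈ s
  · simpa [hx, hy] using hh.dist_le_mul x (subset_closure hx) y (subset_closure hy)
  · simpa [hx, hy] using hmixed hx hy
  · simpa [hx, hy, dist_comm] using hmixed hy hx
  · simp only [indicator_of_notMem hx, indicator_of_notMem hy, dist_self]
    positivity

lemma det_one_add_pos [FiniteDimensional ℝ E] {A : E →L[ℝ] E} (hA : ‖A‖ < 1) :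
    0 < (1 + A).det := by
  have hne : ∀ B ∈ ball (0 : E →L[ℝ] E) 1, (1 + B).det ≠ 0 := by
    intro B hB
    have hunit : IsUnit (1 + B) := by
      simpa using isUnit_one_sub_of_norm_lt_one (x := -B) (by simpa using hB)
    exact ((hunit.map ContinuousLinearMap.toLinearMapRingHom).map LinearMap.det).ne_zero
  have hcont : Continuous fun B : E →L[ℝ] E ↦ (1 + B).det :=
    ContinuousLinearMap.continuous_det.comp (by fun_prop)
  have himage : IsPreconnected ((fun B : E →L[ℝ] E ↦ (1 + B).det) '' ball 0 1) :=
    (convex_ball 0 1).isPreconnected.image _ hcont.continuousOn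
  by_contra! hneg
  obtain ⟨B, hB, hB0⟩ : (0 : ℝ) ∈ (fun B : E →L[ℝ] E ↦ (1 + B).det) '' ball 0 1 :=
    himage.ordConnected.out (mem_image_of_mem _ (by simpa using hA))
      (mem_image_of_mem _ (mem_ball_self one_pos)) ⟨hneg, by simp [ContinuousLinearMap.det]⟩
  exact hne B hB hB0

lemma exists_polynomial_eval_eq_det_one_add_smul [FiniteDimensional ℝ E] (A : E →L[ℝ] E) :
    ∃ P : ℝ[X], P.natDegree ≤ Module.finrank ℝ E ∧ ∀ t : ℝ, P.eval t = (1 + t • A).det := by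
  let b := Module.finBasis ℝ E
  let M := LinearMap.toMatrix b b (A : E →ₗ[ℝ] E)
  refine ⟨((X : ℝ[X]) • M.map C + (1 : Matrix _ _ ℝ).map C).det,
    by simpa using natDegree_det_X_add_C_le M 1, fun t ↦ ?_⟩
  have hdet : (1 + t • A).det = (1 + t • M).det := by
    change LinearMap.det (LinearMap.id + t • (A : E →ₗ[ℝ] E)) = _
    rw [← LinearMap.det_toMatrix b, map_add, map_smul, LinearMap.toMatrix_id]
  rw [hdet, ← coe_evalRingHom, RingHom.map_det]
  congr 1
  ext i j
  by_cases hij : i = j <;> simp [M, hij, mul_comm t, add_comm (1 : ℝ)]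

lemma setIntegral_det_one_add_smul_fderiv [FiniteDimensional ℝ E] [MeasurableSpace E]
    [BorelSpace E] (μ : Measure E) [μ.IsAddHaarMeasure] {h : E → E} {U : Set E} {K : ℝ≥0} {t : ℝ}
    (hU : IsOpen U) (hh : DifferentiableOn ℝ h U) (hK : LipschitzWith K (U.indicator h))
    (ht : ‖t‖₊ * K < 1) : ∫ x in U, (1 + t • fderiv ℝ h x).det ∂μ = μ.real U := by
  have hbij : Bijective fun x ↦ x + t • U.indicator h x :=
    bijective_id_add_of_lipschitzWith ((lipschitzWith_smul t).comp hK) ht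
  have himage : (fun x ↦ x + t • U.indicator h x) '' U = U :=
    image_eq_self_of_eqOn_id_compl hbij fun x hx ↦ by simp [indicator_of_notMem hx]
  have hderiv (x : E) (hx : x ∈ U) : HasFDerivWithinAt (fun x ↦ x + t • U.indicator h x)
      (1 + t • fderiv ℝ h x) U x := by
    have := (hh x hx).differentiableAt (hU.mem_nhds hx)
    refine ((hasFDerivAt_id x).add (this.hasFDerivAt.const_smul t)).hasFDerivWithinAt.congr'
      (fun y hy ↦ by simp [indicator_of_mem hy]) hx
  have hpos (x : E) (hx : x ∈ U) : 0 < (1 + t • fderiv ℝ h x).det := by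
    have hlip : LipschitzOnWith K h U := fun x hx y hy ↦ by simpa [hx, hy] using hK x y
    have := norm_fderiv_le_of_lipschitzOn ℝ (hU.mem_nhds hx) hlip
    refine det_one_add_pos ?_
    rw [norm_smul]
    exact (mul_le_mul_of_nonneg_left this (norm_nonneg t)).trans_lt ht
  have hchange := integral_image_eq_integral_abs_det_fderiv_smul μ hU.measurableSet hderiv
    hbij.injective.injOn fun _ ↦ (1 : ℝ)
  rw [himage] at hchange
  calc ∫ x in U, (1 + t • fderiv ℝ h x).det ∂μ
      = ∫ x in U, |(1 + t • fderiv ℝ h x).det| • (1 : ℝ) ∂μ :=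
        setIntegral_congr_fun hU.measurableSet fun x hx ↦ by simp [abs_of_pos (hpos x hx)]
    _ = μ.real U := by rw [← hchange]; simp

end

section
variable {E : Type*} [NormedAddCommGroup E] [InnerProductSpace ℝ E] [FiniteDimensional ℝ E]

lemma det_eq_zero_of_mem_sphere {g : E → E} {g' : E →L[ℝ] E} {x c : E} {r : ℝ}
    (hg : HasFDerivAt g g' x) (hr : r ≠ 0) (hgr : ∀ᶠ y in 𝓝 x, g y ∈ sphere c r) :
    g'.det = 0 := by
  have horth (v : E) : inner ℝ (g x - c) (g' v) = 0 := by
    have hconst : (fun y ↦ ‖g y - c‖ ^ 2) =ᶠ[𝓝 x] fun _ ↦ r ^ 2 :=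
      hgr.mono fun y hy ↦ by simp [mem_sphere_iff_norm.1 hy]
    have hzero := (hg.sub_const c).norm_sq.unique
      ((hasFDerivAt_const _ x).congr_of_eventuallyEq hconst)
    simpa [inner_sub_left] using congr($hzero v)
  by_contra hdet
  have hsurj : Surjective g' :=
    ((Module.End.isUnit_iff _).1
      ((LinearMap.isUnit_iff_isUnit_det _).2 (Ne.isUnit hdet))).surjective
  obtain ⟨v, hv⟩ := hsurj (g x - c)
  have hcenter : g x - c = 0 := inner_self_eq_zero.1 (hv ▸ horth v)
  exact hr (by rw [← mem_sphere_iff_norm.1 hgr.self_of_nhds, hcenter, norm_zero])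

lemma not_eqOn_id_sphere_of_contDiff {g : E → E} {c : E} {r : ℝ} (hr : 0 < r)
    (hg : ContDiff ℝ 1 g) (hgr : ∀ x, g x ∈ sphere c r) : ¬ EqOn g id (sphere c r) := by
  intro hid
  borelize E
  obtain ⟨K, hK⟩ : ∃ K, LipschitzWith K ((ball c r).indicator (g - id)) := by
    obtain ⟨K, hK⟩ := (hg.sub contDiff_id).contDiffOn.exists_lipschitzOnWith one_ne_zero
      (convex_closedBall c r) (isCompact_closedBall c r)
    refine ⟨K, lipschitzWith_indicator (by rwa [closure_ball c hr.ne']) fun x hx ↦ ?_⟩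
    rw [frontier_ball c hr.ne'] at hx
    simp [hid hx]
  choose P hPdeg hP using fun x ↦ exists_polynomial_eval_eq_det_one_add_smul (fderiv ℝ (g - id) x)
  have hsmall : {t : ℝ | ‖t‖₊ * K < 1} ∈ 𝓝 0 :=
    (isOpen_lt (by fun_prop) continuous_const).mem_nhds (by simp)
  have hvol := integral_eval_eq_of_infinite (μ := volume.restrict (ball c r)) hPdeg
    (infinite_of_mem_nhds 0 hsmall) (c := volume.real (ball c r)) (fun t _ ↦ ?_)
    (fun t ht ↦ ?_) 1
  · have hderiv (x : E) : 1 + (1 : ℝ) • fderiv ℝ (g - id) x = fderiv ℝ g x := by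
      rw [fderiv_sub (hg.differentiable one_ne_zero x) differentiableAt_id]
      simp [ContinuousLinearMap.one_def]
    have hdet (x : E) : (fderiv ℝ g x).det = 0 :=
      det_eq_zero_of_mem_sphere (hg.differentiable one_ne_zero x).hasFDerivAt hr.ne'
        (.of_forall hgr)
    simp_rw [hP, hderiv, hdet, integral_zero] at hvol
    exact (ENNReal.toReal_pos (measure_ball_pos volume c hr).ne' (by finiteness)).ne hvol
  · have hcont : Continuous fun x ↦ (P x).eval t := by
      simp_rw [hP]
      have := (hg.sub contDiff_id).continuous_fderiv one_ne_zero
      exact ContinuousLinearMap.continuous_det.comp (by fun_prop)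
    exact (hcont.continuousOn.integrableOn_compact (isCompact_closedBall c r)).mono_set
      ball_subset_closedBall
  · simp_rw [hP]
    exact setIntegral_det_one_add_smul_fderiv volume isOpen_ball
      ((hg.sub contDiff_id).differentiable one_ne_zero).differentiableOn hK ht

lemma exists_eq_center_of_contDiff {g : E → E} {c : E} {r : ℝ} (hr : 0 < r)
    (hg : ContDiff ℝ 1 g) (hid : EqOn g id (sphere c r)) : ∃ x, g x = c := by
  by_contra! hne
  have hsub (x : E) : g x - c ≠ 0 := sub_ne_zero.2 (hne x)
  refine not_eqOn_id_sphere_of_contDiff (g := fun x ↦ c + r • ‖g x - c‖⁻¹ • (g x - c)) (c := c) hr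
    ?_ (fun x ↦ ?_) fun x hx ↦ ?_
  · have hgc : ContDiff ℝ 1 fun x ↦ g x - c := hg.sub contDiff_const
    exact contDiff_const.add
      ((((hgc.norm ℝ hsub).inv fun x ↦ norm_ne_zero_iff.2 (hsub x)).smul hgc).const_smul r)
  · simp [norm_smul, hsub x, hr.le]
  · simp [hid hx, mem_sphere_iff_norm.1 hx, hr.ne']

lemma surjective_of_eventuallyEq_id_cobounded {f : E → E} (hf : Continuous f)
    (hid : f =ᶠ[Bornology.cobounded E] id) : Surjective f := by
  intro q
  by_contra! hq
  obtain ⟨r, -, hr⟩ := (hasBasis_cobounded_compl_closedBall q).mem_iff.1 hid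
  have hR : r < max r 0 + 1 ∧ 0 < max r 0 + 1 := by grind
  generalize max r 0 + 1 = R at hR
  obtain ⟨g, hg, hgf, hgid, -⟩ := hf.exists_contDiff_approx_and_eqOn 1
    (ε := fun x ↦ dist q (f x)) (by fun_prop) (fun x ↦ dist_pos.2 (hq x).symm)
    (S := (ball q R)ᶜ) (U := (closedBall q r)ᶜ) isOpen_ball.isClosed_compl
    (isClosed_closedBall.isOpen_compl.mem_nhdsSet.2
      (compl_subset_compl.2 (closedBall_subset_ball hR.1)))
    (contDiff_id.contDiffOn.congr hr)
  obtain ⟨x, hx⟩ := exists_eq_center_of_contDiff (c := q) hR.2 hg fun x hx ↦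
    (hgid (by simp [mem_sphere.1 hx])).trans (hr (by simp [mem_sphere.1 hx, hR.1]))
  exact (hgf x).ne (by rw [hx])

end

section
variable {V : Type*} [NormedAddCommGroup V] [NormedSpace ℝ V] [FiniteDimensional ℝ V]

lemma surjective_of_eventuallyEq_id_cocompact {f : V → V} (hf : Continuous f)
    (hid : f =ᶠ[cocompact V] id) : Surjective f := by
  let e : V ≃L[ℝ] EuclideanSpace ℝ (Fin (Module.finrank ℝ V)) := toEuclidean
  suffices Surjective (e ∘ f ∘ e.symm) by
    simpa using this
  refine surjective_of_eventuallyEq_id_cobounded (by fun_prop) ?_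
  rw [cobounded_eq_cocompact]
  filter_upwards [e.symm.toHomeomorph.isClosedEmbedding.tendsto_cocompact.eventually hid] with x hx
  simpa [e.symm_apply_eq] using congr(e $hx)

lemma mem_image_of_forall_notMem_segment {U : Set V} {g : V → V} {q : V} (hU : IsOpen U)
    (hUb : Bornology.IsBounded U) (hg : Continuous g) (hq : q ∈ U)
    (hseg : ∀ z ∈ frontier U, q ∉ segment ℝ (g z) z) : q ∈ g '' U := by
  set A := {z ∈ closure U | q ∈ segment ℝ (g z) z}
  have hA : IsClosed A := by
    have hcompact : IsCompact ((closure U ×ˢ Icc (0 : ℝ) 1) ∩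
        {p | AffineMap.lineMap (g p.1) p.1 p.2 = q}) :=
      (hUb.isCompact_closure.prod isCompact_Icc).inter_right
        (isClosed_eq (by fun_prop) (by fun_prop))
    convert (hcompact.image continuous_fst).isClosed
    ext z
    simp [A, segment_eq_image_lineMap, and_assoc]
  have hdisj : Disjoint A Uᶜ := Set.disjoint_left.2 fun z hz hzU ↦
    hseg z (hU.frontier_eq ▸ ⟨hz.1, hzU⟩) hz.2
  obtain ⟨χ, hχA, hχU, hχ⟩ := exists_continuous_zero_one_of_isClosed hA hU.isClosed_compl hdisj
  have hid : EqOn (fun z ↦ AffineMap.lineMap (g z) z (χ z)) id Uᶜ := fun z hz ↦ by simp [hχU hz]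
  have hsurj : Surjective fun z ↦ AffineMap.lineMap (g z) z (χ z) :=
    surjective_of_eventuallyEq_id_cocompact (by fun_prop)
      (mem_of_superset hUb.isCompact_closure.compl_mem_cocompact fun z hz ↦
        hid fun hzU ↦ hz (subset_closure hzU))
  obtain ⟨z, hz : AffineMap.lineMap (g z) z (χ z) = q⟩ := hsurj q
  have hzU : z ∈ U := by
    by_contra hzU
    have hzq : z = q := (hid hzU).symm.trans hz
    exact hzU (hzq ▸ hq)
  have hzA : z ∈ A :=
    ⟨subset_closure hzU, by rw [segment_eq_image_lineMap]; exact ⟨χ z, hχ z, hz⟩⟩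
  exact ⟨z, hzU, by simpa [hχA hzA] using hz⟩

lemma exists_forall_ball_subset_image_of_forall_notMem_segment {U : Set V} {g : V → V} {q : V}
    (hU : IsOpen U) (hUb : Bornology.IsBounded U) (hg : Continuous g) (hq : q ∈ U)
    (hseg : ∀ z ∈ frontier U, q ∉ segment ℝ (g z) z) :
    ∃ ε > 0, ∀ g' : V → V, Continuous g' → (∀ z ∈ frontier U, dist (g' z) (g z) < ε) →
      ball q ε ⊆ g' '' U := by
  have hclosed : IsClosed (⋃ z ∈ frontier U, segment ℝ (g z) z) := by
    have hcompact : IsCompact (frontier U ×ˢ Icc (0 : ℝ) 1) :=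
      (hUb.isCompact_closure.of_isClosed_subset isClosed_frontier frontier_subset_closure).prod
        isCompact_Icc
    convert (hcompact.image (f := fun p ↦ AffineMap.lineMap (g p.1) p.1 p.2)
      (by fun_prop)).isClosed
    ext y
    simp [segment_eq_image_lineMap, and_assoc]
  obtain ⟨η, hη, hηU⟩ := isOpen_iff.1 (hU.inter hclosed.isOpen_compl) q
    ⟨hq, by simpa using hseg⟩
  refine ⟨η / 2, half_pos hη, fun g' hg' hgg' y hy ↦ ?_⟩
  refine mem_image_of_forall_notMem_segment hU hUb hg'
    (hηU (ball_subset_ball (half_le_self hη.le) hy)).1 fun z hz hyz ↦ ?_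
  rw [segment_eq_image_lineMap] at hyz
  obtain ⟨t, ht, rfl⟩ := hyz
  have hdist : dist (AffineMap.lineMap (g z) z t) (AffineMap.lineMap (g' z) z t) < η / 2 :=
    calc dist (AffineMap.lineMap (g z) z t) (AffineMap.lineMap (g' z) z t)
      _ = |1 - t| * dist (g' z) (g z) := by
        simp_rw [AffineMap.lineMap_apply_module, dist_add_right, dist_smul₀, Real.norm_eq_abs,
          dist_comm (g z)]
      _ ≤ dist (g' z) (g z) :=
        mul_le_of_le_one_left dist_nonneg (abs_le.2 ⟨by linarith [ht.2], by linarith [ht.1]⟩)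
      _ < η / 2 := hgg' z hz
  refine (hηU (mem_ball.2 ?_)).2 (mem_biUnion hz (by
    rw [segment_eq_image_lineMap]; exact mem_image_of_mem _ ht))
  linarith [dist_triangle (AffineMap.lineMap (g z) z t) (AffineMap.lineMap (g' z) z t) q,
    mem_ball.1 hy]

end

section
variable {X V : Type*} [MetricSpace X] [NormedAddCommGroup V] [NormedSpace ℝ V]
  [FiniteDimensional ℝ V]

/-- The locally Lipschitz real functions on `X`, as a subalgebra of `C(X, ℝ)` to which the
Stone–Weierstrass theorem applies. -/
def locallyLipschitzSubalgebra (X : Type*) [MetricSpace X] : Subalgebra ℝ C(X, ℝ) where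
  carrier := {φ | LocallyLipschitz φ}
  mul_mem' hφ hψ :=
    (contDiff_mul (𝕜 := ℝ) (𝔸 := ℝ) (n := 1)).locallyLipschitz.comp (hφ.prodMk hψ)
  add_mem' := LocallyLipschitz.add
  algebraMap_mem' r := LocallyLipschitz.const r

lemma separatesPoints_locallyLipschitzSubalgebra (X : Type*) [MetricSpace X] :
    (locallyLipschitzSubalgebra X).SeparatesPoints := fun x y hxy ↦
  ⟨(dist · y), ⟨⟨(dist · y), by fun_prop⟩,
    show LocallyLipschitz (dist · y) from (LipschitzWith.dist_left y).locallyLipschitz, rfl⟩,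
    by simpa using hxy⟩

lemma exists_locallyLipschitz_dist_lt {S : Set X} (hS : IsCompact S) (c : C(X, V)) {ε : ℝ}
    (hε : 0 < ε) : ∃ ψ : X → V, LocallyLipschitz ψ ∧ ∀ x ∈ S, dist (ψ x) (c x) < ε := by
  let e := (Module.finBasis ℝ V).equivFunL
  obtain ⟨δ, hδ, he⟩ := uniformContinuous_iff.1 e.symm.lipschitz.uniformContinuous ε hε
  choose φ hφ hφc using fun i ↦
    ContinuousMap.exists_mem_subalgebra_near_continuous_of_isCompact_of_separatesPoints
      (separatesPoints_locallyLipschitzSubalgebra X) ⟨fun x ↦ e (c x) i, by fun_prop⟩ hS hδ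
  refine ⟨fun x ↦ e.symm fun i ↦ φ i x, ?_, fun x hx ↦ ?_⟩
  · have hsum : (fun x ↦ e.symm fun i ↦ φ i x) =
        ∑ i, fun x ↦ φ i x • Module.finBasis ℝ V i := by
      ext x
      rw [Finset.sum_apply]
      exact (Module.finBasis ℝ V).equivFun_symm_apply _
    rw [hsum]
    refine Finset.sum_induction _ LocallyLipschitz (fun _ _ ↦ .add) (.const 0) fun i _ ↦ ?_
    exact (ContinuousLinearMap.toSpanSingleton ℝ _).lipschitz.locallyLipschitz.comp (hφ i)
  · rw [← e.symm_apply_apply (c x)]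
    exact he ((dist_pi_lt_iff hδ).2 fun i ↦ hφc i x hx)

lemma hausdorffMeasure_image_pos_of_forall_notMem_segment [MeasurableSpace X] [BorelSpace X]
    {U : Set V} (k : C(V, X)) (Φ : C(X, V)) {q : V} (hU : IsOpen U) (hUb : Bornology.IsBounded U)
    (hq : q ∈ U) (hseg : ∀ z ∈ frontier U, q ∉ segment ℝ (Φ (k z)) z) :
    0 < μH[Module.finrank ℝ V] (k '' U) := by
  obtain ⟨ε, hε, hball⟩ := exists_forall_ball_subset_image_of_forall_notMem_segment hU hUb
    (Φ.comp k).continuous hq hseg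
  have hcompact : IsCompact (k '' closure U) := hUb.isCompact_closure.image k.continuous
  obtain ⟨ψ, hψ, hψΦ⟩ := exists_locallyLipschitz_dist_lt hcompact Φ hε
  obtain ⟨K, hK⟩ := hψ.locallyLipschitzOn.exists_lipschitzOnWith_of_compact hcompact
  have hsub : ball q ε ⊆ ψ '' (k '' U) := by
    rw [image_image]
    exact hball _ (hψ.continuous.comp k.continuous) fun z hz ↦
      hψΦ _ (mem_image_of_mem k (frontier_subset_closure hz))
  borelize V
  by_contra! hzero
  have hle := (hK.mono (image_mono subset_closure)).hausdorffMeasure_image_le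
    (d := Module.finrank ℝ V) (by positivity)
  rw [nonpos_iff_eq_zero.1 hzero, mul_zero] at hle
  exact (measure_ball_pos _ q hε).not_ge ((measure_mono hsub).trans hle)

end

section
variable {V X : Type*} [NormedAddCommGroup V] [NormedSpace ℝ V] [TopologicalSpace X]

lemma exists_extension_of_nullhomotopic {u : C(sphere (0 : V) 1, X)} (hu : u.Nullhomotopic) :
    ∃ k : C(V, X), ∀ z : sphere (0 : V) 1, k z = u z := by
  obtain ⟨x, ⟨H⟩⟩ := hu
  classical
  let k (z : V) : X := if hz : z = 0 then x else
    H (projIcc 0 1 zero_le_one (2 - 2 * ‖z‖), (homeomorphUnitSphereProd V ⟨z, hz⟩).1)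
  have hcenter : EqOn k (fun _ ↦ x) (ball 0 (1 / 2)) := by
    intro z hz
    by_cases hz0 : z = 0
    · simp [k, hz0]
    · have : 1 ≤ 2 - 2 * ‖z‖ := by linarith [mem_ball_zero_iff.1 hz]
      simp [k, hz0, projIcc_of_right_le _ this]
  have hpunctured : ContinuousOn k {0}ᶜ := by
    rw [continuousOn_iff_continuous_domRestrict]
    have : domRestrict {0}ᶜ k = fun z : ({0}ᶜ : Set V) ↦
        H (projIcc 0 1 zero_le_one (2 - 2 * ‖(z : V)‖), (homeomorphUnitSphereProd V z).1) :=
      funext fun z ↦ dif_neg z.2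
    rw [this]
    fun_prop
  have hk : Continuous k := continuous_iff_continuousAt.2 fun z ↦ by
    rcases eq_or_ne z 0 with rfl | hz
    · exact (continuousOn_const.congr hcenter).continuousAt (ball_mem_nhds 0 one_half_pos)
    · exact hpunctured.continuousAt (isOpen_compl_singleton.mem_nhds hz)
  refine ⟨⟨k, hk⟩, fun z ↦ ?_⟩
  have hz : (z : V) ≠ 0 := ne_zero_of_mem_unit_sphere z
  have hproj : (homeomorphUnitSphereProd V ⟨z, hz⟩).1 = z := Subtype.ext (by simp)
  simp [k, hz, hproj]

end


section
variable {E X : Type*} [NormedAddCommGroup E] [TopologicalSpace X]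

/-- The map on the boundary of the cylinder `closedBall 0 1 × [-1, 1]` that is `f` on the top and
`g` on the bottom, both being constant along the vertical direction. Since `E × ℝ` carries the sup
norm, this boundary is the unit sphere of `E × ℝ`. -/
noncomputable def glueCylinderCaps (f g : C(closedBall (0 : E) 1, X))
    (hfg : ∀ p : closedBall (0 : E) 1, ‖(p : E)‖ = 1 → f p = g p) :
    C(sphere (0 : E × ℝ) 1, X) where
  toFun z :=
    let p : closedBall (0 : E) 1 := ⟨z.1.1, mem_closedBall_zero_iff.2
      ((norm_fst_le z.1).trans_eq (mem_sphere_zero_iff_norm.1 z.2))⟩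
    if 0 ≤ z.1.2 then f p else g p
  continuous_toFun := by
    refine Continuous.if_le (by fun_prop) (by fun_prop) (by fun_prop) (by fun_prop) fun z hz ↦ ?_
    have hnorm : max ‖z.1.1‖ ‖z.1.2‖ = 1 := mem_sphere_zero_iff_norm.1 z.2
    exact hfg _ (by simpa [← hz] using hnorm)

variable {f g : C(closedBall (0 : E) 1, X)}
  {hfg : ∀ p : closedBall (0 : E) 1, ‖(p : E)‖ = 1 → f p = g p} {z : sphere (0 : E × ℝ) 1}

lemma exists_glueCylinderCaps_eq_left (hz : 0 ≤ z.1.2) :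
    ∃ p : closedBall (0 : E) 1, (p : E) = z.1.1 ∧ glueCylinderCaps f g hfg z = f p :=
  ⟨_, rfl, if_pos hz⟩

lemma glueCylinderCaps_mem_range_right (hz : z.1.2 < 0) :
    glueCylinderCaps f g hfg z ∈ range g :=
  ⟨_, (if_neg hz.not_ge).symm⟩

lemma notMem_segment_glueCylinderCaps [NormedSpace ℝ E] {c : C(X, E)} {h : C(X, ℝ)}
    {p₀ : closedBall (0 : E) 1} (hp₀ : ‖(p₀ : E)‖ < 1) (hc : ∀ p, c (f p) = p)
    (hh : 0 < h (f p₀)) (hg : ∀ p, h (g p) < 0) (z : sphere (0 : E × ℝ) 1) :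
    ((p₀ : E), (0 : ℝ)) ∉ segment ℝ ((c.prodMk h) (glueCylinderCaps f g hfg z)) z := by
  rintro ⟨a, b, ha, hb, hab, heq⟩
  rcases lt_or_ge z.1.2 0 with hz | hz
  · obtain ⟨p, hp⟩ := glueCylinderCaps_mem_range_right (f := f) (g := g) (hfg := hfg) hz
    have hneg : a • h (g p) + b • z.1.2 < 0 := convex_Iio (0 : ℝ) (hg p) hz ha hb hab
    exact hneg.ne (by simpa [← hp] using congr(Prod.snd $heq))
  · obtain ⟨p, hpz, hp⟩ := exists_glueCylinderCaps_eq_left (f := f) (g := g) (hfg := hfg) hz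
    have hpp₀ : p = p₀ :=
      Subtype.ext (by simpa [hp, hc, ← hpz, ← add_smul, hab] using congr(Prod.fst $heq))
    have htop : z.1.2 = 1 := by
      have hnorm : max ‖z.1.1‖ ‖z.1.2‖ = 1 := mem_sphere_zero_iff_norm.1 z.2
      rw [← hpz, hpp₀] at hnorm
      simpa [abs_of_nonneg hz] using
        ((max_eq_iff.1 hnorm).resolve_left fun hmax ↦ hp₀.ne hmax.1).1
    have hz_pos : 0 < z.1.2 := by simp [htop]
    have hpos : 0 < a • h (f p₀) + b • z.1.2 := convex_Ioi (0 : ℝ) hh hz_pos ha hb hab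
    exact hpos.ne' (by simpa [hp, hpp₀] using congr(Prod.snd $heq))

end

section
universe u
variable {E : Type u} [NormedAddCommGroup E] [NormedSpace ℝ E] [FiniteDimensional ℝ E]
  {X : Type*} [MetricSpace X] [MeasurableSpace X] [BorelSpace X]

theorem range_subset_of_forall_nullhomotopic
    (hX : ∀ u : C(sphere (0 : E × ℝ) 1, X), u.Nullhomotopic)
    (hμ : μH[Module.finrank ℝ E + 1] (univ : Set X) = 0)
    {f : closedBall (0 : E) 1 → X} (hf : Continuous f) (hfi : Injective f)
    {D : Set X} [TietzeExtension.{u} D] (hD : IsClosed D)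
    (hfD : ∀ p : closedBall (0 : E) 1, ‖(p : E)‖ = 1 → f p ∈ D) :
    range f ⊆ D := by
  rintro _ ⟨p₀, rfl⟩
  by_contra hp₀
  obtain ⟨g, hgD, hgf⟩ : ∃ g : C(closedBall (0 : E) 1, X), (∀ p, g p ∈ D) ∧
      ∀ p : closedBall (0 : E) 1, ‖(p : E)‖ = 1 → f p = g p := by
    obtain ⟨g, hgD, hg⟩ := ContinuousMap.exists_forall_mem_restrict_eq
      (s := {p : closedBall (0 : E) 1 | ‖(p : E)‖ = 1}) (isClosed_eq (by fun_prop) (by fun_prop))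
      ⟨fun p ↦ f p, by fun_prop⟩ fun p ↦ hfD p p.2
    exact ⟨g, hgD, fun p hp ↦ congr($hg ⟨p, hp⟩).symm⟩
  have hp₀_lt : ‖(p₀ : E)‖ < 1 :=
    (mem_closedBall_zero_iff.1 p₀.2).lt_of_ne fun h ↦ hp₀ (hfD p₀ h)
  have hpos : 0 < infDist (f p₀) D := (hD.notMem_iff_infDist_pos ⟨g p₀, hgD p₀⟩).1 hp₀
  obtain ⟨c, hc⟩ := (ContinuousMap.mk (Subtype.val : closedBall (0 : E) 1 → E)).exists_extension
    (hf.isClosedEmbedding hfi)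
  let h : C(X, ℝ) := ⟨fun x ↦ infDist x D - infDist (f p₀) D / 2, by fun_prop⟩
  obtain ⟨k, hk⟩ := exists_extension_of_nullhomotopic (hX (glueCylinderCaps ⟨f, hf⟩ g hgf))
  have hdim : μH[Module.finrank ℝ (E × ℝ)] (k '' ball 0 1) = 0 :=
    measure_mono_null (subset_univ _) (by simpa using hμ)
  refine (hausdorffMeasure_image_pos_of_forall_notMem_segment k (c.prodMk h) (q := ((p₀ : E), 0))
    isOpen_ball isBounded_ball (by simpa [Prod.norm_def] using hp₀_lt) fun z hz ↦ ?_).ne' hdim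
  rw [frontier_ball 0 one_ne_zero] at hz
  rw [hk ⟨z, hz⟩]
  refine notMem_segment_glueCylinderCaps hp₀_lt (fun p ↦ congr($hc p)) ?_ (fun p ↦ ?_) ⟨z, hz⟩
  · simp [h, hpos]
  · simp [h, infDist_zero_of_mem (hgD p), hpos]

theorem embedded_balls_with_same_boundary_eq_general
    (hX : ∀ u : C(sphere (0 : E × ℝ) 1, X), u.Nullhomotopic)
    (hμ : μH[Module.finrank ℝ E + 1] (univ : Set X) = 0)
    {f₁ f₂ : closedBall (0 : E) 1 → X} (h₁c : Continuous f₁) (h₁i : Injective f₁)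
    (h₂c : Continuous f₂) (h₂i : Injective f₂)
    (hbd : f₁ '' {p | ‖(p : E)‖ = 1} = f₂ '' {p | ‖(p : E)‖ = 1}) :
    range f₁ = range f₂ := by
  have htietze {f : closedBall (0 : E) 1 → X} (hc : Continuous f) (hi : Injective f) :
      TietzeExtension.{u} (range f) :=
    .of_homeo (hc.isClosedEmbedding hi).isEmbedding.toHomeomorph.symm
  have := htietze h₁c h₁i
  have := htietze h₂c h₂i
  refine Subset.antisymm ?_ ?_
  · exact range_subset_of_forall_nullhomotopic hX hμ h₁c h₁i (isCompact_range h₂c).isClosed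
      fun p hp ↦ image_subset_range _ _ (hbd ▸ mem_image_of_mem f₁ hp)
  · exact range_subset_of_forall_nullhomotopic hX hμ h₂c h₂i (isCompact_range h₁c).isClosed
      fun p hp ↦ image_subset_range _ _ (hbd ▸ mem_image_of_mem f₂ hp)

end

/-- If `X` is a contractible metric space with zero `(n+1)`-dimensional Hausdorff measure,
and `D₁, D₂ ⊂ X` are embedded closed `n`-dimensional balls having the same boundary,
then `D₁ = D₂`. -/
theorem embedded_balls_with_same_boundary_eq {n : ℕ} {X : Type*} [MetricSpace X]
    [MeasurableSpace X] [BorelSpace X] [ContractibleSpace X]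
    (hμ : μH[(n + 1 : ℝ)] (Set.univ : Set X) = 0)
    (D₁ D₂ : Set X)
    (f₁ f₂ : ↥(Metric.closedBall (0 : EuclideanSpace ℝ (Fin n)) 1) → X)
    (h₁c : Continuous f₁) (h₁i : Function.Injective f₁) (h₁r : Set.range f₁ = D₁)
    (h₂c : Continuous f₂) (h₂i : Function.Injective f₂) (h₂r : Set.range f₂ = D₂)
    (hbd : f₁ '' {p | ‖(p : EuclideanSpace ℝ (Fin n))‖ = 1}
         = f₂ '' {p | ‖(p : EuclideanSpace ℝ (Fin n))‖ = 1}) :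
    D₁ = D₂ := by
  rw [← h₁r, ← h₂r]
  exact embedded_balls_with_same_boundary_eq_general
    (fun u ↦ by simpa using (id_nullhomotopic X).comp_left u) (by simpa using hμ)
    h₁c h₁i h₂c h₂i hbd
end

section
/- A length space X is a metric tree if and only if there exists no injective Lipschitz map α:S¹→X. -/
open Set Metric
open scoped ENNReal NNReal

/-- A curve from `x` to `y` parameterized on `[0,1]`. -/
def IsCurveOn {X : Type*} [PseudoEMetricSpace X] (γ : ℝ → X) (x y : X) : Prop :=
  ContinuousOn γ (Set.Icc 0 1) ∧ γ 0 = x ∧ γ 1 = y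

/-- The set of lengths of curves from `x` to `y`. -/
def curveLengths {X : Type*} [PseudoEMetricSpace X] (x y : X) : Set ℝ≥0∞ :=
  {ℓ | ∃ γ : ℝ → X, IsCurveOn γ x y ∧ eVariationOn γ (Set.Icc 0 1) = ℓ}

/-- `X` is a length space if the distance between any two points equals the infimum
of lengths of curves connecting them. -/
def IsLengthSpace (X : Type*) [PseudoEMetricSpace X] : Prop :=
  ∀ x y : X, edist x y = sInf (curveLengths x y)

/-- `X` is a geodesic space if any two points are joined by a curve whose length
equals the distance between them. -/
def IsGeodesicSpace (X : Type*) [PseudoEMetricSpace X] : Prop :=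
  ∀ x y : X, ∃ γ : ℝ → X, IsCurveOn γ x y ∧ eVariationOn γ (Set.Icc 0 1) = edist x y

/-- `A` is an arc with endpoints `x` and `y`: a homeomorphic image of `[0,1]`,
parameterized by an injective continuous curve from `x` to `y`. -/
def IsArc {X : Type*} [PseudoEMetricSpace X] (A : Set X) (x y : X) : Prop :=
  ∃ γ : ℝ → X, IsCurveOn γ x y ∧ Set.InjOn γ (Set.Icc 0 1) ∧ γ '' Set.Icc 0 1 = A

/-- `A` is a rectifiable arc with endpoints `x` and `y`. -/
def IsRectArc {X : Type*} [PseudoEMetricSpace X] (A : Set X) (x y : X) : Prop :=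
  ∃ γ : ℝ → X, IsCurveOn γ x y ∧ Set.InjOn γ (Set.Icc 0 1) ∧ γ '' Set.Icc 0 1 = A ∧
    eVariationOn γ (Set.Icc 0 1) ≠ ⊤

/-- A metric tree: a geodesic space in which any two distinct points are joined by a
unique arc. -/
def IsMetricTree (X : Type*) [PseudoEMetricSpace X] : Prop :=
  IsGeodesicSpace X ∧ ∀ x y : X, x ≠ y → ∃! A : Set X, IsArc A x y

/-- The unit circle `S¹ ⊂ ℝ²` with its induced metric. -/
abbrev Circle' : Type := ↥(Metric.sphere (0 : EuclideanSpace ℝ (Fin 2)) 1)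

/-!
An injective image of `S¹` provides two different arcs between the images of two antipodal points,
so it cannot lie in a metric tree.

Conversely, let `X` be a length space without injective Lipschitz circles. If an injective
rectifiable path left the image of another one with the same endpoints, the excursion would close
up to such a circle; hence all injective rectifiable paths from `x` to `y` have the same compact
image. By Arzelà–Ascoli this image contains a shortest path, which realizes the infimum of the
lengths of all curves and is therefore a geodesic. An arbitrary, possibly non-rectifiable, arc from
`x` to `y` can be approximated by concatenations of short geodesics. Cutting loops out of these
yields injective rectifiable paths, whose image is the geodesic one, so the geodesic lies in the arc
and fills it by connectedness.
-/

/-- `f` is a `1`-Lipschitz path from `x` to `y`; it stands for a rectifiable curve of length at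
most `ℓ`. The domain is `[0, ℓ]` rather than `[0, 1]`, so that restricting and concatenating paths
needs no rescaling. -/
structure IsUnitLipschitzPath {X : Type*} [PseudoEMetricSpace X] (f : ℝ → X) (ℓ : ℝ) (x y : X) :
    Prop where
  nonneg : 0 ≤ ℓ
  lipschitzOn : LipschitzOnWith 1 f (Icc 0 ℓ)
  source : f 0 = x
  target : f ℓ = y

/-- The lengths `ℓ` of the domains of the `1`-Lipschitz paths from `x` to `y` inside `S`. The
infimum of this set is the intrinsic distance of `S` between `x` and `y`. -/
def pathLengths {X : Type*} [PseudoEMetricSpace X] (S : Set X) (x y : X) : Set ℝ :=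
  {ℓ | ∃ f : ℝ → X, IsUnitLipschitzPath f ℓ x y ∧ MapsTo f (Icc 0 ℓ) S}

/-- Some Lipschitz map `S¹ → X` is injective. -/
def ContainsLipschitzCircle (X : Type*) [PseudoEMetricSpace X] : Prop :=
  ∃ (K : ℝ≥0) (α : Circle' → X), Function.Injective α ∧ LipschitzWith K α

section PathLengths

variable {X : Type*} [PseudoMetricSpace X] {S T : Set X} {x y z : X} {f g : ℝ → X}
  {K : ℝ≥0} {a b c s t ℓ m : ℝ}

lemma lipschitzOnWith_of_le {I : Set ℝ}
    (h : ∀ s ∈ I, ∀ t ∈ I, s ≤ t → dist (f s) (f t) ≤ K * (t - s)) : LipschitzOnWith K f I := by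
  refine LipschitzOnWith.of_dist_le_mul fun s hs t ht => ?_
  rcases le_total s t with hst | hts
  · simpa [dist_comm s t, Real.dist_eq, abs_of_nonneg (sub_nonneg.2 hst)] using h s hs t ht hst
  · simpa [dist_comm (f s), Real.dist_eq, abs_of_nonneg (sub_nonneg.2 hts)] using h t ht s hs hts

lemma dist_le_mul_sub (hf : LipschitzOnWith K f (Icc a b)) (hs : a ≤ s) (hst : s ≤ t)
    (ht : t ≤ b) : dist (f s) (f t) ≤ K * (t - s) := by
  simpa [dist_comm s t, Real.dist_eq, abs_of_nonneg (sub_nonneg.2 hst)] using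
    hf.dist_le_mul s ⟨hs, hst.trans ht⟩ t ⟨hs.trans hst, ht⟩

lemma lipschitzOnWith_Icc_union (hab : LipschitzOnWith K f (Icc a b))
    (hbc : LipschitzOnWith K f (Icc b c)) : LipschitzOnWith K f (Icc a c) := by
  refine lipschitzOnWith_of_le fun s hs t ht hst => ?_
  rcases le_total t b with htb | hbt
  · exact dist_le_mul_sub hab hs.1 hst htb
  rcases le_total b s with hbs | hsb
  · exact dist_le_mul_sub hbc hbs hst ht.2
  calc dist (f s) (f t) ≤ dist (f s) (f b) + dist (f b) (f t) := dist_triangle _ _ _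
    _ ≤ K * (b - s) + K * (t - b) :=
        add_le_add (dist_le_mul_sub hab hs.1 hsb le_rfl) (dist_le_mul_sub hbc le_rfl hbt ht.2)
    _ = K * (t - s) := by ring

namespace IsUnitLipschitzPath

lemma continuousOn (hf : IsUnitLipschitzPath f ℓ x y) : ContinuousOn f (Icc 0 ℓ) :=
  hf.lipschitzOn.continuousOn

lemma zero_mem (hf : IsUnitLipschitzPath f ℓ x y) : (0 : ℝ) ∈ Icc 0 ℓ :=
  left_mem_Icc.2 hf.nonneg

lemma length_mem (hf : IsUnitLipschitzPath f ℓ x y) : ℓ ∈ Icc 0 ℓ :=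
  right_mem_Icc.2 hf.nonneg

lemma dist_le_sub (hf : IsUnitLipschitzPath f ℓ x y) (hs : 0 ≤ s) (hst : s ≤ t) (ht : t ≤ ℓ) :
    dist (f s) (f t) ≤ t - s := by
  simpa using dist_le_mul_sub hf.lipschitzOn hs hst ht

lemma dist_le (hf : IsUnitLipschitzPath f ℓ x y) : dist x y ≤ ℓ := by
  simpa [hf.source, hf.target] using hf.dist_le_sub le_rfl hf.nonneg le_rfl

lemma symm (hf : IsUnitLipschitzPath f ℓ x y) : IsUnitLipschitzPath (fun t => f (ℓ - t)) ℓ y x where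
  nonneg := hf.nonneg
  lipschitzOn := lipschitzOnWith_of_le fun s hs t ht hst => by
    have := hf.dist_le_sub (sub_nonneg.2 ht.2) (sub_le_sub_left hst ℓ) (sub_le_self ℓ hs.1)
    rw [dist_comm, NNReal.coe_one]
    linarith
  source := by simp [hf.target]
  target := by simp [hf.source]

lemma subpath (hf : IsUnitLipschitzPath f ℓ x y) (hs : 0 ≤ s) (hst : s ≤ t) (ht : t ≤ ℓ) :
    IsUnitLipschitzPath (fun u => f (s + u)) (t - s) (f s) (f t) where
  nonneg := sub_nonneg.2 hst
  lipschitzOn := lipschitzOnWith_of_le fun u hu v hv huv => by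
    have := hf.dist_le_sub (add_nonneg hs hu.1) (add_le_add_right huv s) (by linarith [hv.2])
    rw [NNReal.coe_one]
    linarith
  source := by simp
  target := by simp

lemma trans (hf : IsUnitLipschitzPath f ℓ x y) (hg : IsUnitLipschitzPath g m y z) :
    IsUnitLipschitzPath (fun t => if t ≤ ℓ then f t else g (t - ℓ)) (ℓ + m) x z := by
  have agree : ∀ t ∈ Icc ℓ (ℓ + m), (if t ≤ ℓ then f t else g (t - ℓ)) = g (t - ℓ) := by
    intro t ht
    rcases ht.1.eq_or_lt with rfl | hlt
    · simp [hf.target, hg.source]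
    · exact if_neg hlt.not_ge
  refine ⟨add_nonneg hf.nonneg hg.nonneg, lipschitzOnWith_Icc_union (b := ℓ) ?_ ?_, ?_, ?_⟩
  · refine lipschitzOnWith_of_le fun s hs t ht hst => ?_
    simpa [hs.2, ht.2] using hf.dist_le_sub hs.1 hst ht.2
  · refine lipschitzOnWith_of_le fun s hs t ht hst => ?_
    have := hg.dist_le_sub (sub_nonneg.2 hs.1) (sub_le_sub_right hst ℓ) (by linarith [ht.2])
    rw [agree s hs, agree t ht, NNReal.coe_one]
    linarith
  · simpa [hf.nonneg] using hf.source
  · simpa [hg.target] using agree (ℓ + m) ⟨le_add_of_nonneg_right hg.nonneg, le_rfl⟩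

end IsUnitLipschitzPath

lemma dist_mem_lowerBounds_pathLengths : dist x y ∈ lowerBounds (pathLengths S x y) :=
  fun _ ⟨_, hf, _⟩ => hf.dist_le

lemma pathLengths_mono (hST : S ⊆ T) : pathLengths S x y ⊆ pathLengths T x y :=
  fun _ ⟨f, hf, hfS⟩ => ⟨f, hf, hfS.mono_right hST⟩

lemma mem_pathLengths_symm (h : ℓ ∈ pathLengths S x y) : ℓ ∈ pathLengths S y x :=
  let ⟨_, hf, hfS⟩ := h
  ⟨_, hf.symm, fun _ ht => hfS ⟨sub_nonneg.2 ht.2, sub_le_self _ ht.1⟩⟩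

lemma add_mem_pathLengths (hℓ : ℓ ∈ pathLengths S x y) (hm : m ∈ pathLengths S y z) :
    ℓ + m ∈ pathLengths S x z := by
  obtain ⟨f, hf, hfS⟩ := hℓ
  obtain ⟨g, hg, hgS⟩ := hm
  refine ⟨_, hf.trans hg, fun t ht => ?_⟩
  by_cases htℓ : t ≤ ℓ
  · simpa [htℓ] using hfS ⟨ht.1, htℓ⟩
  · simpa [htℓ] using hgS ⟨by linarith, by linarith [ht.2]⟩

lemma sub_mem_pathLengths (hf : IsUnitLipschitzPath f ℓ x y) (hfS : MapsTo f (Icc 0 ℓ) S)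
    (hs : 0 ≤ s) (hst : s ≤ t) (ht : t ≤ ℓ) : t - s ∈ pathLengths S (f s) (f t) :=
  ⟨_, hf.subpath hs hst ht, fun _ hu => hfS ⟨add_nonneg hs hu.1, by linarith [hu.2]⟩⟩

lemma injOn_of_isLeast_pathLengths (hℓ : IsLeast (pathLengths S x y) ℓ)
    (hf : IsUnitLipschitzPath f ℓ x y) (hfS : MapsTo f (Icc 0 ℓ) S) : InjOn f (Icc 0 ℓ) := by
  have ne_of_lt : ∀ s ∈ Icc 0 ℓ, ∀ t ∈ Icc 0 ℓ, s < t → f s ≠ f t := by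
    intro s hs t ht hst hfst
    have before : s ∈ pathLengths S x (f s) := by
      simpa [hf.source] using sub_mem_pathLengths hf hfS le_rfl hs.1 hs.2
    have after : ℓ - t ∈ pathLengths S (f s) y := by
      simpa [hf.target, hfst] using sub_mem_pathLengths hf hfS ht.1 ht.2 le_rfl
    linarith [hℓ.2 (add_mem_pathLengths before after)]
  intro s hs t ht hfst
  rcases lt_trichotomy s t with hst | hst | hts
  · exact absurd hfst (ne_of_lt s hs t ht hst)
  · exact hst
  · exact absurd hfst.symm (ne_of_lt t ht s hs hts)

end PathLengths

section BoundedPaths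

variable {X : Type*} [PseudoMetricSpace X] {S : Set X} {x y : X} {ℓ : ℝ}

/-- The `1`-Lipschitz paths in `S` from `x` to `y` whose length is at most `L`, each recorded with
its length and extended to `ℝ`. The condition `dist (f t) y ≤ |t - ℓ|` amounts to `f ℓ = y`, and
unlike the latter it is visibly closed under pointwise limits in `(ℓ, f)`. -/
def boundedPaths (S : Set X) (x y : X) (L : ℝ) : Set (ℝ × (ℝ → X)) :=
  {p | p.1 ∈ Icc 0 L ∧ LipschitzWith 1 p.2 ∧ p.2 0 = x ∧ (∀ t, dist (p.2 t) y ≤ |t - p.1|) ∧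
    ∀ t, p.2 t ∈ S}

lemma exists_mem_boundedPaths {L : ℝ} (hℓ : ℓ ∈ pathLengths S x y) (hℓL : ℓ ≤ L) :
    ∃ f, (ℓ, f) ∈ boundedPaths S x y L := by
  obtain ⟨f, hf, hfS⟩ := hℓ
  let r : ℝ → ℝ := fun t => projIcc 0 ℓ hf.nonneg t
  have hr (t : ℝ) : r t ∈ Icc 0 ℓ := (projIcc 0 ℓ hf.nonneg t).2
  have r_lip : LipschitzWith 1 r := by
    simpa [r, Function.comp_def] using
      (LipschitzWith.subtype_val (Icc 0 ℓ)).comp (LipschitzWith.projIcc hf.nonneg)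
  have fr_lip : LipschitzWith 1 (f ∘ r) := by
    simpa [lipschitzOnWith_univ] using
      hf.lipschitzOn.comp (lipschitzOnWith_univ.2 r_lip) fun t _ => hr t
  have fr_target : (f ∘ r) ℓ = y := by simp [r, hf.target]
  refine ⟨f ∘ r, ⟨hf.nonneg, hℓL⟩, fr_lip, by simp [r, hf.source], fun t => ?_, fun t => hfS (hr t)⟩
  rw [← fr_target]
  simpa [Real.dist_eq] using fr_lip.dist_le_mul t ℓ

end BoundedPaths

section Minimization

variable {X : Type*} [MetricSpace X] {S : Set X} {x y : X} {ℓ : ℝ}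

lemma isCompact_boundedPaths (hS : IsCompact S) (x y : X) (L : ℝ) :
    IsCompact (boundedPaths S x y L) := by
  refine (isCompact_Icc.prod (isCompact_univ_pi fun _ : ℝ => hS)).of_isClosed_subset ?_
    fun p hp => ⟨hp.1, fun t _ => hp.2.2.2.2 t⟩
  have eval (t : ℝ) : Continuous fun p : ℝ × (ℝ → X) => p.2 t :=
    (continuous_apply t).comp continuous_snd
  simp only [boundedPaths, ofPred_and, ofPred_forall]
  refine .inter (isClosed_Icc.preimage continuous_fst) <|
    .inter ((isClosed_setOfPred_lipschitzWith 1).preimage continuous_snd) <|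
    .inter (isClosed_eq (eval 0) continuous_const) <|
    .inter (isClosed_iInter fun t => ?_) (isClosed_iInter fun t => ?_)
  · exact isClosed_le ((eval t).dist continuous_const) (continuous_const.sub continuous_fst).abs
  · exact hS.isClosed.preimage (eval t)

lemma mem_pathLengths_of_mem_boundedPaths {L : ℝ} {p : ℝ × (ℝ → X)}
    (hp : p ∈ boundedPaths S x y L) : p.1 ∈ pathLengths S x y := by
  obtain ⟨hℓ, hlip, hsource, hdist, hpS⟩ := hp
  exact ⟨p.2, ⟨hℓ.1, hlip.lipschitzOnWith, hsource, dist_le_zero.1 (by simpa using hdist p.1)⟩,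
    fun t _ => hpS t⟩

lemma exists_isLeast_pathLengths (hS : IsCompact S) (hne : (pathLengths S x y).Nonempty) :
    ∃ ℓ, IsLeast (pathLengths S x y) ℓ := by
  obtain ⟨L, hL⟩ := hne
  obtain ⟨g, hg⟩ := exists_mem_boundedPaths hL le_rfl
  obtain ⟨p, hp, hmin⟩ :=
    (isCompact_boundedPaths hS x y L).exists_isMinOn ⟨_, hg⟩ continuous_fst.continuousOn
  refine ⟨p.1, mem_pathLengths_of_mem_boundedPaths hp, fun ℓ hℓ => ?_⟩
  rcases le_total ℓ L with hℓL | hLℓ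
  · obtain ⟨f, hf⟩ := exists_mem_boundedPaths hℓ hℓL
    exact hmin hf
  · exact hp.1.2.trans hLℓ

lemma exists_injOn_of_mem_pathLengths (hℓ : ℓ ∈ pathLengths S x y) :
    ∃ ℓ' ≤ ℓ, ∃ f, IsUnitLipschitzPath f ℓ' x y ∧ InjOn f (Icc 0 ℓ') ∧
      MapsTo f (Icc 0 ℓ') S := by
  obtain ⟨g, hg, hgS⟩ := hℓ
  have hmem : ℓ ∈ pathLengths (g '' Icc 0 ℓ) x y := ⟨g, hg, mapsTo_image _ _⟩
  obtain ⟨ℓ', hmin⟩ :=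
    exists_isLeast_pathLengths (isCompact_Icc.image_of_continuousOn hg.continuousOn) ⟨ℓ, hmem⟩
  obtain ⟨f, hf, hfg⟩ := hmin.1
  exact ⟨ℓ', hmin.2 hmem, f, hf, injOn_of_isLeast_pathLengths hmin hf hfg,
    hfg.mono_right hgS.image_subset⟩

end Minimization

section ArcLength

open Filter Topology

lemma continuousOn_variationOnFromTo {α E : Type*} [LinearOrder α] [TopologicalSpace α]
    [OrderTopology α] [PseudoEMetricSpace E] {f : α → E} {s : Set α} {a : α}
    (hf : BoundedVariationOn f s) (hc : ContinuousOn f s) (ha : a ∈ s) :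
    ContinuousOn (variationOnFromTo f s a) s := by
  intro t ht
  have right : Tendsto (fun u => (eVariationOn f (s ∩ Icc t u)).toReal) (𝓝[s] t) (𝓝 0) :=
    (ENNReal.tendsto_toReal ENNReal.zero_ne_top).comp
      (hf.tendsto_eVariationOn_Icc_zero_right t ((hc t ht).mono inter_subset_left))
  have left : Tendsto (fun u => (eVariationOn f (s ∩ Icc u t)).toReal) (𝓝[s] t) (𝓝 0) :=
    (ENNReal.tendsto_toReal ENNReal.zero_ne_top).comp
      (hf.tendsto_eVariationOn_Icc_zero_left ((hc t ht).mono inter_subset_left))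
  have sum := right.add left
  rw [add_zero] at sum
  rw [ContinuousWithinAt, tendsto_iff_dist_tendsto_zero]
  refine squeeze_zero' (.of_forall fun _ => dist_nonneg) ?_ sum
  filter_upwards [self_mem_nhdsWithin] with u hu
  rw [Real.dist_eq, variationOnFromTo.sub_right hf.locallyBoundedVariationOn ha hu ht]
  rcases le_total t u with htu | hut
  · rw [variationOnFromTo.eq_of_le _ _ htu, abs_of_nonneg ENNReal.toReal_nonneg]
    exact le_add_of_nonneg_right ENNReal.toReal_nonneg
  · rw [variationOnFromTo.eq_of_ge _ _ hut, abs_neg, abs_of_nonneg ENNReal.toReal_nonneg]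
    exact le_add_of_nonneg_left ENNReal.toReal_nonneg

lemma lipschitzOnWith_one_of_hasUnitSpeedOn {E : Type*} [PseudoMetricSpace E] {f : ℝ → E}
    {s : Set ℝ} (hf : HasUnitSpeedOn f s) : LipschitzOnWith 1 f s := by
  refine lipschitzOnWith_of_le fun t ht u hu htu => ?_
  have h : edist (f t) (f u) ≤ eVariationOn f (s ∩ Icc t u) :=
    eVariationOn.edist_le f ⟨ht, left_mem_Icc.2 htu⟩ ⟨hu, right_mem_Icc.2 htu⟩
  rwa [hf ht hu, edist_dist, NNReal.coe_one,
    ENNReal.ofReal_le_ofReal_iff (by simpa using htu)] at h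

lemma toReal_eVariationOn_mem_pathLengths {X : Type*} [MetricSpace X] {γ : ℝ → X} {a b : ℝ}
    (hab : a ≤ b) (hc : ContinuousOn γ (Icc a b)) (hγ : BoundedVariationOn γ (Icc a b)) :
    (eVariationOn γ (Icc a b)).toReal ∈ pathLengths (γ '' Icc a b) (γ a) (γ b) := by
  set ℓ := (eVariationOn γ (Icc a b)).toReal with hℓ
  let V := variationOnFromTo γ (Icc a b) a
  have ha : a ∈ Icc a b := left_mem_Icc.2 hab
  have hb : b ∈ Icc a b := right_mem_Icc.2 hab
  have V_left : V a = 0 := variationOnFromTo.self _ _ _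
  have V_right : V b = ℓ := by
    simp only [V, variationOnFromTo.eq_of_le _ _ hab, inter_self, hℓ]
  have V_image : V '' Icc a b = Icc 0 ℓ := by
    rw [← V_left, ← V_right]
    exact (continuousOn_variationOnFromTo hγ hc ha).image_Icc_of_monotoneOn hab
      (variationOnFromTo.monotoneOn hγ.locallyBoundedVariationOn ha)
  let φ := naturalParameterization γ (Icc a b) a
  have φ_V (t : ℝ) (ht : t ∈ Icc a b) : φ (V t) = γ t :=
    edist_eq_zero.1 (edist_naturalParameterization_eq_zero hγ.locallyBoundedVariationOn ha ht)
  refine ⟨φ, ⟨ENNReal.toReal_nonneg, ?_, ?_, ?_⟩, ?_⟩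
  · rw [← V_image]
    exact lipschitzOnWith_one_of_hasUnitSpeedOn
      (has_unit_speed_naturalParameterization γ hγ.locallyBoundedVariationOn ha)
  · rw [← V_left, φ_V a ha]
  · rw [← V_right, φ_V b hb]
  · rw [← V_image]
    rintro _ ⟨t, ht, rfl⟩
    exact ⟨t, ht, (φ_V t ht).symm⟩

end ArcLength

section SemicircleGlue

/-- The first coordinate of a point of `S¹`, rescaled to `[0, 1]`: each of the two closed
semicircles bounded by `(±1, 0)` is a graph over this parameter. -/
noncomputable def abscissa (z : Circle') : ℝ := (z.1 0 + 1) / 2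

lemma sq_ordinate_eq (z : Circle') : z.1 1 ^ 2 = 4 * abscissa z * (1 - abscissa z) := by
  have h : z.1 0 ^ 2 + z.1 1 ^ 2 = 1 := by
    simpa [Fin.sum_univ_two] using (EuclideanSpace.norm_sq_eq z.1).symm
  rw [abscissa]
  linarith

lemma abscissa_mem_Icc (z : Circle') : abscissa z ∈ Icc (0 : ℝ) 1 := by
  have := sq_ordinate_eq z
  constructor <;> nlinarith [sq_nonneg (z.1 1)]

lemma abs_sub_apply_le_dist (z w : Circle') (i : Fin 2) : |z.1 i - w.1 i| ≤ dist z w := by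
  rw [Subtype.dist_eq, dist_eq_norm]
  simpa using PiLp.norm_apply_le (z.1 - w.1) i

lemma abs_abscissa_sub_le_dist (z w : Circle') : |abscissa z - abscissa w| ≤ dist z w := by
  have h : abscissa z - abscissa w = (z.1 0 - w.1 0) / 2 := by
    simp only [abscissa]
    ring
  rw [h, abs_div, abs_two]
  exact (half_le_self (abs_nonneg _)).trans (abs_sub_apply_le_dist z w 0)

lemma eq_of_abscissa_eq {z w : Circle'} (h : abscissa z = abscissa w)
    (hside : 0 ≤ z.1 1 ↔ 0 ≤ w.1 1) : z = w := by
  have first : z.1 0 = w.1 0 := by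
    simp only [abscissa] at h
    linarith
  have second : z.1 1 = w.1 1 := by
    have hsq : z.1 1 ^ 2 = w.1 1 ^ 2 := by rw [sq_ordinate_eq, sq_ordinate_eq, h]
    rcases sq_eq_sq_iff_eq_or_eq_neg.1 hsq with heq | hneg
    · exact heq
    · grind
  ext i
  fin_cases i
  exacts [first, second]

lemma exists_abs_abscissa_sub_le (z : Circle') :
    ∃ e ∈ ({0, 1} : Set ℝ), |abscissa z - e| ≤ |z.1 1| := by
  have hsq := sq_ordinate_eq z
  obtain ⟨h0, h1⟩ := abscissa_mem_Icc z
  rcases le_total (abscissa z) (1 / 2) with hle | hge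
  · exact ⟨0, by simp, sq_le_sq.1 (by nlinarith)⟩
  · exact ⟨1, by simp, sq_le_sq.1 (by nlinarith)⟩

lemma exists_endpoint_of_opposite_sides {z w : Circle'} (hz : 0 ≤ z.1 1) (hw : w.1 1 < 0) :
    ∃ e ∈ ({0, 1} : Set ℝ), |abscissa z - e| ≤ dist z w ∧ |e - abscissa w| ≤ 2 * dist z w := by
  obtain ⟨e, he, hze⟩ := exists_abs_abscissa_sub_le z
  have height : |z.1 1| ≤ dist z w :=
    calc |z.1 1| = z.1 1 := abs_of_nonneg hz
      _ ≤ z.1 1 - w.1 1 := by linarith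
      _ ≤ |z.1 1 - w.1 1| := le_abs_self _
      _ ≤ dist z w := abs_sub_apply_le_dist z w 1
  have z_e : |abscissa z - e| ≤ dist z w := hze.trans height
  refine ⟨e, he, z_e, ?_⟩
  calc |e - abscissa w| ≤ |e - abscissa z| + |abscissa z - abscissa w| := abs_sub_le _ _ _
    _ ≤ dist z w + dist z w :=
        add_le_add (abs_sub_comm e (abscissa z) ▸ z_e) (abs_abscissa_sub_le_dist z w)
    _ = 2 * dist z w := (two_mul _).symm

variable {X : Type*} {F G : ℝ → X}

/-- The map on `S¹` which is `F` on the upper and `G` on the lower semicircle, both parameterized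
by `abscissa`. -/
noncomputable def semicircleGlue (F G : ℝ → X) (z : Circle') : X :=
  if 0 ≤ z.1 1 then F (abscissa z) else G (abscissa z)

lemma injective_semicircleGlue (hF : InjOn F (Icc 0 1)) (hG : InjOn G (Icc 0 1))
    (hend : EqOn F G {0, 1}) (hFG : Disjoint (F '' Ioo 0 1) (G '' Icc 0 1)) :
    Function.Injective (semicircleGlue F G) := by
  have mixed (z w : Circle') (hw : ¬ 0 ≤ w.1 1) : F (abscissa z) ≠ G (abscissa w) := by
    intro h
    have hz : abscissa z ∈ ({0, 1} : Set ℝ) := by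
      by_contra hcon
      have hIoo : abscissa z ∈ Ioo (0 : ℝ) 1 := by
        rw [← Icc_sdiff_both]
        exact ⟨abscissa_mem_Icc z, hcon⟩
      exact hFG.ne_of_mem (mem_image_of_mem F hIoo) (mem_image_of_mem G (abscissa_mem_Icc w)) h
    have hzw : abscissa z = abscissa w :=
      hG (abscissa_mem_Icc z) (abscissa_mem_Icc w) ((hend hz).symm.trans h)
    have hsq : w.1 1 ^ 2 = 0 := by
      rw [sq_ordinate_eq, ← hzw]
      rcases hz with h0 | h1
      · simp [h0]
      · rw [h1]
        norm_num
    exact hw (pow_eq_zero_iff two_ne_zero |>.1 hsq).ge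
  intro z w h
  by_cases hz : 0 ≤ z.1 1 <;> by_cases hw : 0 ≤ w.1 1 <;>
    simp only [semicircleGlue, hz, hw, if_true, if_false] at h
  · exact eq_of_abscissa_eq (hF (abscissa_mem_Icc z) (abscissa_mem_Icc w) h) (by simp [hz, hw])
  · exact absurd h (mixed z w hw)
  · exact absurd h.symm (mixed w z hz)
  · exact eq_of_abscissa_eq (hG (abscissa_mem_Icc z) (abscissa_mem_Icc w) h) (by simp [hz, hw])

lemma lipschitzWith_semicircleGlue [PseudoMetricSpace X] {K : ℝ≥0}
    (hF : LipschitzOnWith K F (Icc 0 1)) (hG : LipschitzOnWith K G (Icc 0 1))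
    (hend : EqOn F G {0, 1}) : LipschitzWith (3 * K) (semicircleGlue F G) := by
  have same {H : ℝ → X} (hH : LipschitzOnWith K H (Icc 0 1)) (z w : Circle') :
      dist (H (abscissa z)) (H (abscissa w)) ≤ 3 * K * dist z w :=
    calc dist (H (abscissa z)) (H (abscissa w)) ≤ K * |abscissa z - abscissa w| :=
          hH.dist_le_mul _ (abscissa_mem_Icc z) _ (abscissa_mem_Icc w)
      _ ≤ K * dist z w := by gcongr; exact abs_abscissa_sub_le_dist z w
      _ ≤ 3 * (K * dist z w) := le_mul_of_one_le_left (by positivity) (by norm_num)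
      _ = 3 * K * dist z w := (mul_assoc _ _ _).symm
  have mixed (z w : Circle') (hz : 0 ≤ z.1 1) (hw : ¬ 0 ≤ w.1 1) :
      dist (F (abscissa z)) (G (abscissa w)) ≤ 3 * K * dist z w := by
    obtain ⟨e, he, z_e, e_w⟩ := exists_endpoint_of_opposite_sides hz (not_le.1 hw)
    have he_mem : e ∈ Icc (0 : ℝ) 1 := by rcases he with rfl | rfl <;> simp
    calc dist (F (abscissa z)) (G (abscissa w))
        ≤ dist (F (abscissa z)) (F e) + dist (G e) (G (abscissa w)) := by
          simpa only [hend he] using dist_triangle (F (abscissa z)) (F e) (G (abscissa w))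
      _ ≤ K * |abscissa z - e| + K * |e - abscissa w| :=
          add_le_add (hF.dist_le_mul _ (abscissa_mem_Icc z) _ he_mem)
            (hG.dist_le_mul _ he_mem _ (abscissa_mem_Icc w))
      _ ≤ K * dist z w + K * (2 * dist z w) := by gcongr
      _ = 3 * K * dist z w := by ring
  refine LipschitzWith.of_dist_le_mul fun z w => ?_
  simp only [NNReal.coe_mul, NNReal.coe_ofNat]
  by_cases hz : 0 ≤ z.1 1 <;> by_cases hw : 0 ≤ w.1 1 <;>
    simp only [semicircleGlue, hz, hw, if_true, if_false]
  · exact same hF z w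
  · exact mixed z w hz hw
  · rw [dist_comm, dist_comm z]
    exact mixed w z hw hz
  · exact same hG z w

lemma lineMap_image_Icc_zero_one (a b : ℝ) :
    (AffineMap.lineMap a b : ℝ → ℝ) '' Icc 0 1 = uIcc a b := by
  rw [← segment_eq_image_lineMap, segment_eq_uIcc]

lemma lineMap_image_Ioo_zero_one {a b : ℝ} (hab : a ≠ b) :
    (AffineMap.lineMap a b : ℝ → ℝ) '' Ioo 0 1 = uIoo a b := by
  rw [← openSegment_eq_image_lineMap, openSegment_eq_Ioo' hab, uIoo]

lemma mapsTo_lineMap_Icc_zero_one (a b : ℝ) :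
    MapsTo (AffineMap.lineMap a b : ℝ → ℝ) (Icc 0 1) (uIcc a b) :=
  mapsTo_iff_image_subset.2 (lineMap_image_Icc_zero_one a b).subset

lemma containsLipschitzCircle_of_arcs [PseudoMetricSpace X] {f g : ℝ → X} {a b c d : ℝ}
    {K L : ℝ≥0} (hab : a ≠ b) (hcd : c ≠ d) (hf : LipschitzOnWith K f (uIcc a b))
    (hg : LipschitzOnWith L g (uIcc c d)) (hfi : InjOn f (uIcc a b)) (hgi : InjOn g (uIcc c d))
    (hac : f a = g c) (hbd : f b = g d) (hfg : Disjoint (f '' uIoo a b) (g '' uIcc c d)) :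
    ContainsLipschitzCircle X := by
  let F := f ∘ (AffineMap.lineMap a b : ℝ → ℝ)
  let G := g ∘ (AffineMap.lineMap c d : ℝ → ℝ)
  have F_lip : LipschitzOnWith (K * nndist a b) F (Icc 0 1) :=
    hf.comp (lipschitzWith_lineMap a b).lipschitzOnWith (mapsTo_lineMap_Icc_zero_one a b)
  have G_lip : LipschitzOnWith (L * nndist c d) G (Icc 0 1) :=
    hg.comp (lipschitzWith_lineMap c d).lipschitzOnWith (mapsTo_lineMap_Icc_zero_one c d)
  have F_inj : InjOn F (Icc 0 1) :=
    hfi.comp (AffineMap.lineMap_injective ℝ hab).injOn (mapsTo_lineMap_Icc_zero_one a b)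
  have G_inj : InjOn G (Icc 0 1) :=
    hgi.comp (AffineMap.lineMap_injective ℝ hcd).injOn (mapsTo_lineMap_Icc_zero_one c d)
  have ends : EqOn F G {0, 1} := by
    rintro e (rfl | rfl)
    · simpa [F, G] using hac
    · simpa [F, G] using hbd
  have disjoint : Disjoint (F '' Ioo 0 1) (G '' Icc 0 1) := by
    rwa [image_comp, image_comp, lineMap_image_Ioo_zero_one hab, lineMap_image_Icc_zero_one]
  exact ⟨_, semicircleGlue F G, injective_semicircleGlue F_inj G_inj ends disjoint,
    lipschitzWith_semicircleGlue (F_lip.weaken (le_max_left _ _))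
      (G_lip.weaken (le_max_right _ _)) ends⟩

end SemicircleGlue

lemma exists_Ioo_disjoint_of_isClosed {α : Type*} [ConditionallyCompleteLinearOrder α]
    [TopologicalSpace α] [OrderTopology α] {Z : Set α} {a b c : α} (hZ : IsClosed Z) (ha : a ∈ Z)
    (hb : b ∈ Z) (hc : c ∈ Icc a b) (hcZ : c ∉ Z) :
    ∃ a' ∈ Z, ∃ b' ∈ Z, a ≤ a' ∧ b' ≤ b ∧ c ∈ Ioo a' b' ∧ Disjoint (Ioo a' b') Z := by
  obtain ⟨a', ⟨⟨haa', ha'c⟩, ha'⟩, a'_max⟩ :=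
    (isCompact_Icc.inter_right hZ : IsCompact (Icc a c ∩ Z)).exists_isGreatest
      ⟨a, left_mem_Icc.2 hc.1, ha⟩
  obtain ⟨b', ⟨⟨hcb', hb'b⟩, hb'⟩, b'_min⟩ :=
    (isCompact_Icc.inter_right hZ : IsCompact (Icc c b ∩ Z)).exists_isLeast
      ⟨b, right_mem_Icc.2 hc.2, hb⟩
  refine ⟨a', ha', b', hb', haa', hb'b, ⟨ha'c.lt_of_ne ?_, hcb'.lt_of_ne ?_⟩, ?_⟩
  · exact fun h => hcZ (h ▸ ha')
  · exact fun h => hcZ (h ▸ hb')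
  refine disjoint_left.2 fun t ht htZ => ?_
  rcases le_total t c with htc | hct
  · exact ht.1.not_ge (a'_max ⟨⟨haa'.trans ht.1.le, htc⟩, htZ⟩)
  · exact ht.2.not_ge (b'_min ⟨⟨hct, ht.2.le.trans hb'b⟩, htZ⟩)

section GeodesicSpace

variable {X : Type*} [PseudoMetricSpace X] {x y : X}

lemma exists_injOn_of_dist_mem_pathLengths (h : dist x y ∈ pathLengths univ x y) :
    ∃ f, IsUnitLipschitzPath f (dist x y) x y ∧ InjOn f (Icc 0 (dist x y)) :=
  let ⟨f, hf, hfS⟩ := h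
  ⟨f, hf, injOn_of_isLeast_pathLengths ⟨h, dist_mem_lowerBounds_pathLengths⟩ hf hfS⟩

lemma isGeodesicSpace_of_dist_mem_pathLengths
    (h : ∀ x y : X, dist x y ∈ pathLengths univ x y) : IsGeodesicSpace X := by
  intro x y
  obtain ⟨f, hf, -⟩ := h x y
  have scale : MapsTo (fun t => dist x y * t) (Icc 0 1) (Icc 0 (dist x y)) := fun t ht =>
    ⟨mul_nonneg dist_nonneg ht.1, mul_le_of_le_one_right dist_nonneg ht.2⟩
  have hlip : LipschitzOnWith (nndist x y) (fun t => f (dist x y * t)) (Icc 0 1) :=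
    lipschitzOnWith_of_le fun s hs t ht hst => by
      simpa [mul_sub] using hf.dist_le_sub (scale hs).1
        (mul_le_mul_of_nonneg_left hst dist_nonneg) (scale ht).2
  refine ⟨fun t => f (dist x y * t), ⟨hlip.continuousOn, by simp [hf.source],
    by simp [hf.target]⟩, le_antisymm ?_ ?_⟩
  · calc eVariationOn (fun t => f (dist x y * t)) (Icc 0 1)
        ≤ nndist x y * eVariationOn id (Icc (0 : ℝ) 1) :=
          hlip.comp_eVariationOn_le (mapsTo_id (Icc 0 1))
      _ = edist x y := by rw [eVariationOn_id_Icc, edist_nndist]; simp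
  · simpa [hf.source, hf.target] using
      eVariationOn.edist_le (fun t => f (dist x y * t)) (left_mem_Icc.2 zero_le_one)
        (right_mem_Icc.2 zero_le_one)

lemma nonempty_pathLengths_thickening (h : ∀ x y : X, dist x y ∈ pathLengths univ x y) {A : Set X}
    (hA : IsPreconnected A) {ε : ℝ} (hε : 0 < ε) (hx : x ∈ A) (hy : y ∈ A) :
    (pathLengths (thickening ε A) x y).Nonempty := by
  refine hA.induction₂ (fun p q => (pathLengths (thickening ε A) p q).Nonempty)
    (fun p hp => ?_) (fun p q r _ _ _ ⟨k, hk⟩ ⟨n, hn⟩ => ⟨k + n, add_mem_pathLengths hk hn⟩)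
    (fun p q _ _ ⟨k, hk⟩ => ⟨k, mem_pathLengths_symm hk⟩) hx hy
  filter_upwards [mem_nhdsWithin_of_mem_nhds (ball_mem_nhds p hε)] with q hq
  obtain ⟨f, hf, -⟩ := h p q
  refine ⟨dist p q, f, hf, fun t ht => mem_thickening_iff.2 ⟨p, hp, ?_⟩⟩
  calc dist (f t) p = dist (f 0) (f t) := by rw [hf.source, dist_comm]
    _ ≤ t := by simpa using hf.dist_le_sub le_rfl ht.1 ht.2
    _ ≤ dist p q := ht.2
    _ < ε := by rwa [dist_comm]

end GeodesicSpace

section Geodesics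

variable {X : Type*} [MetricSpace X] {x y : X} {f g : ℝ → X} {ℓ m : ℝ}

-- A point of `f` off `g` lies on a subarc of `f` that meets `g` at its two endpoints only; these
-- endpoints also bound a subarc of `g`, and the two subarcs form a circle.
lemma image_subset_image_of_not_containsLipschitzCircle (hno : ¬ ContainsLipschitzCircle X)
    (hf : IsUnitLipschitzPath f ℓ x y) (hfi : InjOn f (Icc 0 ℓ))
    (hg : IsUnitLipschitzPath g m x y) (hgi : InjOn g (Icc 0 m)) :
    f '' Icc 0 ℓ ⊆ g '' Icc 0 m := by
  rintro _ ⟨c, hc, rfl⟩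
  by_contra hcg
  let Z := Icc 0 ℓ ∩ f ⁻¹' (g '' Icc 0 m)
  have Z_closed : IsClosed Z := hf.continuousOn.preimage_isClosed_of_isClosed isClosed_Icc
    (isCompact_Icc.image_of_continuousOn hg.continuousOn).isClosed
  have zero_mem_Z : 0 ∈ Z := ⟨hf.zero_mem, 0, hg.zero_mem, hg.source.trans hf.source.symm⟩
  have length_mem_Z : ℓ ∈ Z := ⟨hf.length_mem, m, hg.length_mem, hg.target.trans hf.target.symm⟩
  obtain ⟨a, ⟨ha, u, hu, hua⟩, b, ⟨hb, v, hv, hvb⟩, -, -, hcab, hgap⟩ :=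
    exists_Ioo_disjoint_of_isClosed Z_closed zero_mem_Z length_mem_Z hc fun h => hcg h.2
  have hab : a < b := hcab.1.trans hcab.2
  have huv : u ≠ v := by
    rintro rfl
    exact hab.ne (hfi ha hb (hua.symm.trans hvb))
  have sub_f : uIcc a b ⊆ Icc 0 ℓ := uIcc_subset_Icc ha hb
  have sub_g : uIcc u v ⊆ Icc 0 m := uIcc_subset_Icc hu hv
  refine hno (containsLipschitzCircle_of_arcs hab.ne huv (hf.lipschitzOn.mono sub_f)
    (hg.lipschitzOn.mono sub_g) (hfi.mono sub_f) (hgi.mono sub_g) hua.symm hvb.symm ?_)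
  rw [uIoo_of_lt hab, disjoint_left]
  rintro _ ⟨t, ht, rfl⟩ hgt
  exact disjoint_left.1 hgap ht ⟨⟨ha.1.trans ht.1.le, ht.2.le.trans hb.2⟩, image_mono sub_g hgt⟩

lemma IsLengthSpace.exists_mem_pathLengths_lt (hl : IsLengthSpace X) {r : ℝ} (hr : dist x y < r) :
    ∃ ℓ ∈ pathLengths univ x y, ℓ < r := by
  have hlt : sInf (curveLengths x y) < ENNReal.ofReal r := hl x y ▸ edist_lt_ofReal.2 hr
  obtain ⟨_, ⟨γ, ⟨hc, rfl, rfl⟩, rfl⟩, hγr⟩ := sInf_lt_iff.1 hlt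
  have hfin : eVariationOn γ (Icc 0 1) ≠ ⊤ := hγr.ne_top
  exact ⟨_, pathLengths_mono (subset_univ _)
    (toReal_eVariationOn_mem_pathLengths zero_le_one hc hfin),
    (ENNReal.lt_ofReal_iff_toReal_lt hfin).1 hγr⟩

-- All injective paths from `x` to `y` have the same compact image, inside which the length is
-- minimized.
lemma IsLengthSpace.dist_mem_pathLengths (hl : IsLengthSpace X)
    (hno : ¬ ContainsLipschitzCircle X) (x y : X) : dist x y ∈ pathLengths univ x y := by
  obtain ⟨_, hmem, -⟩ := hl.exists_mem_pathLengths_lt (lt_add_one (dist x y))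
  obtain ⟨m, -, g, hg, hgi, -⟩ := exists_injOn_of_mem_pathLengths hmem
  let A := g '' Icc 0 m
  have A_compact : IsCompact A := isCompact_Icc.image_of_continuousOn hg.continuousOn
  obtain ⟨ℓ, hℓ, ℓ_min⟩ :=
    exists_isLeast_pathLengths A_compact ⟨m, g, hg, mapsTo_image g (Icc 0 m)⟩
  have hle : ℓ ≤ dist x y := by
    refine le_of_forall_gt fun r hr => ?_
    obtain ⟨k, hk, hkr⟩ := hl.exists_mem_pathLengths_lt hr
    obtain ⟨k', hk'k, f, hf, hfi, -⟩ := exists_injOn_of_mem_pathLengths hk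
    have hfA := image_subset_image_of_not_containsLipschitzCircle hno hf hfi hg hgi
    exact (ℓ_min ⟨f, hf, mapsTo_iff_image_subset.2 hfA⟩).trans_lt (hk'k.trans_lt hkr)
  rw [← hle.antisymm (dist_mem_lowerBounds_pathLengths hℓ)]
  exact pathLengths_mono (subset_univ A) hℓ

lemma image_subset_of_isPreconnected (h : ∀ x y : X, dist x y ∈ pathLengths univ x y)
    (hno : ¬ ContainsLipschitzCircle X) (hf : IsUnitLipschitzPath f ℓ x y)
    (hfi : InjOn f (Icc 0 ℓ)) {A : Set X} (hA : IsPreconnected A) (hAc : IsClosed A) (hx : x ∈ A)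
    (hy : y ∈ A) : f '' Icc 0 ℓ ⊆ A := by
  intro p hp
  rw [← hAc.closure_eq, closure_eq_iInter_thickening, mem_iInter₂]
  intro ε hε
  obtain ⟨_, hk⟩ := nonempty_pathLengths_thickening h hA hε hx hy
  obtain ⟨m, -, g, hg, hgi, hgA⟩ := exists_injOn_of_mem_pathLengths hk
  exact hgA.image_subset
    (image_subset_image_of_not_containsLipschitzCircle hno hf hfi hg hgi hp)

end Geodesics

section Arcs

lemma isArc_image_uIcc {X : Type*} [PseudoEMetricSpace X] {f : ℝ → X} {a b : ℝ} (hab : a ≠ b)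
    (hc : ContinuousOn f (uIcc a b)) (hi : InjOn f (uIcc a b)) :
    IsArc (f '' uIcc a b) (f a) (f b) := by
  have maps := mapsTo_lineMap_Icc_zero_one a b
  refine ⟨f ∘ AffineMap.lineMap a b, ⟨?_, by simp, by simp⟩, ?_, ?_⟩
  · exact hc.comp (by fun_prop) maps
  · exact hi.comp (AffineMap.lineMap_injective ℝ hab).injOn maps
  · rw [image_comp, lineMap_image_Icc_zero_one]

-- If `C` missed `γ c`, the images of `[a, c]` and `[c, b]` would separate it.
lemma eq_image_of_isPreconnected_of_subset {X : Type*} [TopologicalSpace X] [T2Space X]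
    {γ : ℝ → X} {a b : ℝ} {C : Set X} (hγ : ContinuousOn γ (Icc a b)) (hi : InjOn γ (Icc a b))
    (hC : IsPreconnected C) (hCγ : C ⊆ γ '' Icc a b) (ha : γ a ∈ C) (hb : γ b ∈ C) :
    C = γ '' Icc a b := by
  refine hCγ.antisymm ?_
  rintro _ ⟨c, hc, rfl⟩
  have left_sub : Icc a c ⊆ Icc a b := Icc_subset_Icc_right hc.2
  have right_sub : Icc c b ⊆ Icc a b := Icc_subset_Icc_left hc.1
  have isClosed_image {I : Set ℝ} (hI : IsCompact I) (hIab : I ⊆ Icc a b) : IsClosed (γ '' I) :=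
    (hI.image_of_continuousOn (hγ.mono hIab)).isClosed
  have cover : C ⊆ γ '' Icc a c ∪ γ '' Icc c b := by
    rwa [← image_union, Icc_union_Icc_eq_Icc hc.1 hc.2]
  obtain ⟨_, hp, ⟨s, hs, rfl⟩, ⟨t, ht, hts⟩⟩ := isPreconnected_closed_iff.1 hC _ _
    (isClosed_image isCompact_Icc left_sub) (isClosed_image isCompact_Icc right_sub) cover
    ⟨γ a, ha, a, left_mem_Icc.2 hc.1, rfl⟩ ⟨γ b, hb, b, right_mem_Icc.2 hc.2, rfl⟩
  have hst : s = t := hi (left_sub hs) (right_sub ht) hts.symm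
  have hsc : s = c := hs.2.antisymm (hst ▸ ht.1)
  rwa [← hsc]

/-- The point of `S¹` at angle `θ`. -/
noncomputable def circlePoint (θ : ℝ) : Circle' :=
  ⟨!₂[Real.cos θ, Real.sin θ], by simp [EuclideanSpace.norm_eq, Fin.sum_univ_two]⟩

lemma circlePoint_apply_zero (θ : ℝ) : (circlePoint θ).1 0 = Real.cos θ := rfl

lemma circlePoint_apply_one (θ : ℝ) : (circlePoint θ).1 1 = Real.sin θ := rfl

lemma continuous_circlePoint : Continuous circlePoint := by
  refine Continuous.subtype_mk ((PiLp.continuous_toLp 2 _).comp (continuous_pi fun i => ?_)) _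
  fin_cases i
  exacts [Real.continuous_cos, Real.continuous_sin]

lemma injOn_circlePoint_uIcc_pi : InjOn circlePoint (uIcc 0 Real.pi) := by
  rw [uIcc_of_le Real.pi_pos.le]
  exact fun θ hθ φ hφ h => Real.injOn_cos hθ hφ (congrArg (fun z : Circle' => z.1 0) h)

lemma injOn_circlePoint_uIcc_neg_pi : InjOn circlePoint (uIcc 0 (-Real.pi)) := by
  rw [uIcc_of_ge (neg_nonpos.2 Real.pi_pos.le)]
  intro θ hθ φ hφ h
  refine neg_injective (Real.injOn_cos ⟨neg_nonneg.2 hθ.2, neg_le.1 hθ.1⟩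
    ⟨neg_nonneg.2 hφ.2, neg_le.1 hφ.1⟩ ?_)
  simpa [circlePoint_apply_zero] using congrArg (fun z : Circle' => z.1 0) h

lemma circlePoint_neg_pi : circlePoint (-Real.pi) = circlePoint Real.pi := by
  simp [circlePoint]

lemma image_circlePoint_ne :
    circlePoint '' uIcc 0 Real.pi ≠ circlePoint '' uIcc 0 (-Real.pi) := by
  intro h
  have top_mem : circlePoint (Real.pi / 2) ∈ circlePoint '' uIcc 0 Real.pi := by
    rw [uIcc_of_le Real.pi_pos.le]
    exact mem_image_of_mem _ ⟨Real.pi_div_two_pos.le, half_le_self Real.pi_pos.le⟩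
  rw [h, uIcc_of_ge (neg_nonpos.2 Real.pi_pos.le)] at top_mem
  obtain ⟨θ, hθ, hθtop⟩ := top_mem
  have hsin : Real.sin θ = 1 := by
    simpa [circlePoint_apply_one] using congrArg (fun z : Circle' => z.1 1) hθtop
  linarith [Real.sin_nonpos_of_nonpos_of_neg_pi_le hθ.2 hθ.1]

lemma not_existsUnique_isArc_of_injective {X : Type*} [PseudoEMetricSpace X] {α : Circle' → X}
    (hα : Continuous α) (hi : Function.Injective α) :
    ¬ ∃! A : Set X, IsArc A (α (circlePoint 0)) (α (circlePoint Real.pi)) := by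
  intro hunique
  have arc {b : ℝ} (hb : 0 ≠ b) (hinj : InjOn circlePoint (uIcc 0 b)) :
      IsArc (α '' (circlePoint '' uIcc 0 b)) (α (circlePoint 0)) (α (circlePoint b)) := by
    rw [← image_comp]
    exact isArc_image_uIcc hb (hα.comp continuous_circlePoint).continuousOn (hi.comp_injOn hinj)
  have upper := arc Real.pi_ne_zero.symm injOn_circlePoint_uIcc_pi
  have lower := arc (neg_ne_zero.2 Real.pi_ne_zero).symm injOn_circlePoint_uIcc_neg_pi
  rw [circlePoint_neg_pi] at lower
  exact image_circlePoint_ne (hi.image_injective (hunique.unique upper lower))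

lemma IsMetricTree.not_injective {X : Type*} [PseudoEMetricSpace X] (hX : IsMetricTree X)
    {α : Circle' → X} (hα : Continuous α) : ¬ Function.Injective α := by
  intro hi
  refine not_existsUnique_isArc_of_injective hα hi (hX.2 _ _ (hi.ne fun h => ?_))
  exact Real.pi_ne_zero (injOn_circlePoint_uIcc_pi left_mem_uIcc right_mem_uIcc h).symm

lemma existsUnique_isArc {X : Type*} [MetricSpace X]
    (h : ∀ x y : X, dist x y ∈ pathLengths univ x y) (hno : ¬ ContainsLipschitzCircle X) {x y : X}
    (hxy : x ≠ y) : ∃! A : Set X, IsArc A x y := by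
  obtain ⟨f, hf, hfi⟩ := exists_injOn_of_dist_mem_pathLengths (h x y)
  have hfarc : IsArc (f '' Icc 0 (dist x y)) x y := by
    have := isArc_image_uIcc (f := f) (dist_pos.2 hxy).ne
    rw [uIcc_of_le dist_nonneg, hf.source, hf.target] at this
    exact this hf.continuousOn hfi
  refine ⟨_, hfarc, ?_⟩
  rintro _ ⟨γ, ⟨hγ, hx, hy⟩, hγi, rfl⟩
  have hsub : f '' Icc 0 (dist x y) ⊆ γ '' Icc 0 1 :=
    image_subset_of_isPreconnected h hno hf hfi (isPreconnected_Icc.image γ hγ)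
      (isCompact_Icc.image_of_continuousOn hγ).isClosed
      ⟨0, left_mem_Icc.2 zero_le_one, hx⟩ ⟨1, right_mem_Icc.2 zero_le_one, hy⟩
  exact (eq_image_of_isPreconnected_of_subset hγ hγi
    (isPreconnected_Icc.image f hf.continuousOn) hsub ⟨0, hf.zero_mem, hf.source.trans hx.symm⟩
    ⟨dist x y, hf.length_mem, hf.target.trans hy.symm⟩).symm

end Arcs

/-- A length space is a metric tree if and only if there is no one-to-one Lipschitz
map `α : S¹ → X`. -/
theorem metricTree_iff_no_injective_lipschitz_circle {X : Type*} [MetricSpace X]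
    (hl : IsLengthSpace X) :
    IsMetricTree X ↔
      ¬ ∃ (K : ℝ≥0) (α : Circle' → X), Function.Injective α ∧ LipschitzWith K α := by
  constructor
  · rintro hX ⟨K, α, hα, hlip⟩
    exact hX.not_injective hlip.continuous hα
  · intro hno
    have h := hl.dist_mem_pathLengths hno
    exact ⟨isGeodesicSpace_of_dist_mem_pathLengths h, fun _ _ => existsUnique_isArc h hno⟩
end

section
/- Let Ω⊂ℝⁿ and U⊂ℝᵐ be open, g:Ω→U and f:U→ℝᵏ Lipschitz. If rank Df(y)≤r for almost every y∈U, then rank D(f∘g)(x)≤r for almost every x∈Ω. -/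
open Set Metric MeasureTheory
open scoped NNReal

/-- The rank of the derivative of `f` at `x`. -/
noncomputable def derivRank {E F : Type*} [NormedAddCommGroup E] [NormedSpace ℝ E]
    [NormedAddCommGroup F] [NormedSpace ℝ F] (f : E → F) (x : E) : ℕ :=
  Module.finrank ℝ (LinearMap.range ((fderiv ℝ f x) : E →ₗ[ℝ] F))

/-!
By composing with a right inverse of the derivative `L` of `f ∘ g` at `x` and with a projection onto
the range of `L`, one may assume that `f ∘ g` has derivative the identity at `x`; it then suffices
to find many points near `g x` at which `Df` is surjective. For almost every small vector `v` the
map `f` is differentiable at `g t + v` for almost every `t` (Fubini), so that the chain rule holds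
almost everywhere for `t ↦ f (g t + v)`. On a small ball this Lipschitz map is uniformly close, up
to a constant, to the identity, and such a map `φ` cannot have vanishing Jacobian almost everywhere:
modify it near the boundary of the ball to a Lipschitz map `ψ` which is the identity outside. Then
`∫ det Dψ` is the volume of the ball, whereas the modified shell contributes arbitrarily little.

That `∫ det Dψ` is the volume follows from the area formula. With `u = id - ψ`, the integral of
`det (t • 1 - Du)` is a polynomial in `t`, and it is known for large `t`, where `id - t⁻¹ • u` is a
bijection with positive Jacobian; now take `t = 1`.
-/

open Filter Measure Module Polynomial
open scoped Topology ENNReal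

section Polynomial

variable {α : Type*} [MeasurableSpace α] {μ : Measure α}

lemma exists_polynomial_eval_eq_integral {n : ℕ} {P : α → ℝ[X]} (hdeg : ∀ x, (P x).degree < n)
    (hint : ∀ t : ℝ, Integrable (fun x ↦ (P x).eval t) μ) :
    ∃ p : ℝ[X], ∀ t : ℝ, p.eval t = ∫ x, (P x).eval t ∂μ := by
  have hnodes : InjOn (fun i : ℕ ↦ (i : ℝ)) (Finset.range n) := Nat.cast_injective.injOn
  refine ⟨Lagrange.interpolate (Finset.range n) (fun i : ℕ ↦ (i : ℝ))
    fun i ↦ ∫ x, (P x).eval (i : ℝ) ∂μ, fun t ↦ ?_⟩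
  have hinterp (x : α) : (P x).eval t = ∑ i ∈ Finset.range n,
      (P x).eval (i : ℝ) * (Lagrange.basis (Finset.range n) (fun i : ℕ ↦ (i : ℝ)) i).eval t := by
    conv_lhs => rw [Lagrange.eq_interpolate (f := P x) hnodes (by simpa using hdeg x)]
    simp only [Lagrange.interpolate_apply, eval_finsetSum, eval_mul, eval_C]
  simp_rw [hinterp, Lagrange.interpolate_apply, eval_finsetSum, eval_mul, eval_C]
  rw [integral_finsetSum (Finset.range n) fun i _ ↦ (hint (i : ℝ)).mul_const _]
  simp only [integral_mul_const]

end Polynomial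

section Lipschitz

variable {E : Type*} [NormedAddCommGroup E] [NormedSpace ℝ E]

lemma bijective_sub_of_lipschitz [CompleteSpace E] {K : ℝ≥0} {u : E → E}
    (hu : LipschitzWith K u) (hK : K < 1) : Function.Bijective fun x ↦ x - u x := by
  have happrox : ApproximatesLinearOn (fun x ↦ x - u x)
      (ContinuousLinearEquiv.refl ℝ E : E →L[ℝ] E) univ K := by
    rw [ApproximatesLinearOn.approximatesLinearOn_iff_lipschitzOnWith, lipschitzOnWith_univ]
    have : (fun x ↦ x - u x) - ⇑(ContinuousLinearEquiv.refl ℝ E : E →L[ℝ] E) = -u := by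
      ext x
      simp
    exact this ▸ hu.neg
  have hK' : Subsingleton E ∨
      K < ‖((ContinuousLinearEquiv.refl ℝ E).symm : E →L[ℝ] E)‖₊⁻¹ := by
    rcases subsingleton_or_nontrivial E with hE | hE
    · exact Or.inl hE
    · have hid : ‖((ContinuousLinearEquiv.refl ℝ E).symm : E →L[ℝ] E)‖₊ = 1 :=
        ContinuousLinearMap.nnnorm_id
      exact Or.inr (by rwa [hid, inv_one])
  exact ⟨injOn_univ.1 (happrox.injOn hK'), happrox.surjective hK'⟩

variable [FiniteDimensional ℝ E]

lemma exists_lipschitz_eqOn_ball_eqOn_compl_ball {K : ℝ≥0} {φ : E → E} (hφ : LipschitzWith K φ)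
    {x₀ : E} {σ ρ : ℝ} (hclose : ∀ x ∈ ball x₀ σ, dist (φ x) x ≤ ρ - σ) :
    ∃ ψ : E → E, LipschitzWith (lipschitzExtensionConstant E * (K + 2)) ψ ∧
      EqOn ψ φ (ball x₀ σ) ∧ EqOn ψ id (ball x₀ ρ)ᶜ := by
  classical
  set φ' : E → E := (ball x₀ σ).piecewise φ id
  have hφ'in : EqOn φ' φ (ball x₀ σ) := piecewise_eqOn _ _ _
  have hφ'out : EqOn φ' id (ball x₀ ρ)ᶜ := by
    refine (piecewise_eqOn_compl _ _ _).mono (compl_subset_compl.2 fun x hx ↦ ?_)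
    exact ball_subset_ball (by linarith [dist_nonneg.trans (hclose x hx)]) hx
  have hcross {x y : E} (hx : x ∈ ball x₀ σ) (hy : y ∈ (ball x₀ ρ)ᶜ) :
      dist (φ' x) (φ' y) ≤ (K + 2) * dist x y := by
    have hxy : ρ - σ ≤ dist x y := by
      have := dist_triangle_left y x₀ x
      simp only [mem_compl_iff, mem_ball, not_lt] at hx hy
      linarith
    rw [hφ'in hx, hφ'out hy]
    calc dist (φ x) y ≤ dist (φ x) x + dist x y := dist_triangle _ _ _
      _ ≤ 2 * dist x y := by linarith [hclose x hx]
      _ ≤ (K + 2) * dist x y := by gcongr; simp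
  have hlip : LipschitzOnWith (K + 2) φ' (ball x₀ σ ∪ (ball x₀ ρ)ᶜ) := by
    refine LipschitzOnWith.of_dist_le_mul fun x hx y hy ↦ ?_
    push_cast
    rcases hx with hx | hx <;> rcases hy with hy | hy
    · rw [hφ'in hx, hφ'in hy]
      exact (hφ.dist_le_mul x y).trans (by gcongr; simp)
    · exact hcross hx hy
    · simpa only [dist_comm] using hcross hy hx
    · rw [hφ'out hx, hφ'out hy, id, id]
      exact le_mul_of_one_le_left dist_nonneg (by linarith [K.coe_nonneg])
  obtain ⟨ψ, hψ, heq⟩ := hlip.extend_finite_dimension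
  exact ⟨ψ, hψ, (heq.symm.mono subset_union_left).trans hφ'in,
    (heq.symm.mono subset_union_right).trans hφ'out⟩

variable [MeasurableSpace E] [BorelSpace E]

lemma integrableOn_comp_fderiv_of_lipschitz {F : Type*} [NormedAddCommGroup F] [NormedSpace ℝ F]
    [FiniteDimensional ℝ F] {G : Type*} [NormedAddCommGroup G]
    {K : ℝ≥0} {f : E → F} (hf : LipschitzWith K f) {Φ : (E →L[ℝ] F) → G} (hΦ : Continuous Φ)
    {μ : Measure E} {s : Set E} (hs : μ s ≠ ∞) : IntegrableOn (fun x ↦ Φ (fderiv ℝ f x)) s μ := by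
  borelize (E →L[ℝ] F)
  have := FiniteDimensional.proper ℝ (E →L[ℝ] F)
  obtain ⟨C, hC⟩ := (isCompact_closedBall (0 : E →L[ℝ] F) K).exists_bound_of_continuousOn
    hΦ.continuousOn
  refine Measure.integrableOn_of_bounded (M := C) hs
    (hΦ.comp_stronglyMeasurable (measurable_fderiv ℝ f).stronglyMeasurable).aestronglyMeasurable
    (Eventually.of_forall fun x ↦ hC _ ?_)
  simpa using norm_fderiv_le_of_lipschitz ℝ hf

lemma exists_polynomial_eval_eq_integral_det_smul_one_sub_fderiv {K : ℝ≥0} {u : E → E}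
    (hu : LipschitzWith K u) {μ : Measure E} {s : Set E} (hμs : μ s ≠ ∞) :
    ∃ p : ℝ[X], ∀ t : ℝ, p.eval t = ∫ x in s, (t • (1 : E →L[ℝ] E) - fderiv ℝ u x).det ∂μ := by
  have hcharpoly (x : E) (t : ℝ) : (fderiv ℝ u x : E →ₗ[ℝ] E).charpoly.eval t =
      (t • (1 : E →L[ℝ] E) - fderiv ℝ u x).det :=
    LinearMap.eval_charpoly _ _
  have hdeg (x : E) : (fderiv ℝ u x : E →ₗ[ℝ] E).charpoly.degree < (finrank ℝ E + 1 : ℕ) := by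
    rw [degree_eq_natDegree (LinearMap.charpoly_monic _).ne_zero, LinearMap.charpoly_natDegree]
    exact_mod_cast Nat.lt_succ_self _
  simp_rw [← hcharpoly]
  refine exists_polynomial_eval_eq_integral hdeg fun t ↦ ?_
  simp_rw [hcharpoly]
  exact integrableOn_comp_fderiv_of_lipschitz hu
    (Φ := fun A ↦ (t • (1 : E →L[ℝ] E) - A).det)
    (ContinuousLinearMap.continuous_det.comp (continuous_const.sub continuous_id)) hμs

variable (μ : Measure E) [μ.IsAddHaarMeasure]

lemma addHaar_image_eq_zero_of_lipschitz {K : ℝ≥0} {f : E → E} (hf : LipschitzWith K f)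
    {s : Set E} (hs : μ s = 0) : μ (f '' s) = 0 := by
  have hH : (μH[finrank ℝ E] : Measure E) s = 0 :=
    absolutelyContinuous_isAddHaarMeasure _ μ hs
  refine absolutelyContinuous_isAddHaarMeasure μ μH[finrank ℝ E] (le_antisymm ?_ bot_le)
  simpa [hH] using hf.hausdorffMeasure_image_le (d := finrank ℝ E) (by positivity) s

lemma lintegral_abs_det_fderiv_eq_addHaar_image_of_lipschitz {K : ℝ≥0} {f : E → E}
    (hf : LipschitzWith K f) {s : Set E} (hs : MeasurableSet s) (hinj : InjOn f s) :
    ∫⁻ x in s, ENNReal.ofReal |(fderiv ℝ f x).det| ∂μ = μ (f '' s) := by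
  set D : Set E := {x | DifferentiableAt ℝ f x}
  have hDc : μ Dᶜ = 0 := hf.ae_differentiableAt
  have hsD : (s ∩ D : Set E) =ᵐ[μ] s := inter_ae_eq_left_of_ae_eq_univ (ae_eq_univ.2 hDc)
  have himage : μ (f '' (s ∩ D)) = μ (f '' s) := by
    refine le_antisymm (measure_mono (image_mono inter_subset_left)) ?_
    calc μ (f '' s) ≤ μ (f '' (s ∩ D) ∪ f '' Dᶜ) := by
          rw [← image_union]
          exact measure_mono (image_mono fun x hx ↦ by by_cases h : x ∈ D <;> simp [hx, h])
      _ ≤ μ (f '' (s ∩ D)) + μ (f '' Dᶜ) := measure_union_le _ _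
      _ = μ (f '' (s ∩ D)) := by rw [addHaar_image_eq_zero_of_lipschitz μ hf hDc, add_zero]
  rw [← himage, ← setLIntegral_congr hsD]
  exact lintegral_abs_det_fderiv_eq_addHaar_image μ
    (hs.inter (measurableSet_of_differentiableAt ℝ f))
    (fun x hx ↦ hx.2.hasFDerivAt.hasFDerivWithinAt) (hinj.mono inter_subset_left)

lemma eventually_integral_det_one_sub_fderiv_eq_measureReal :
    ∀ᶠ δ in 𝓝 (0 : ℝ≥0), ∀ (u : E → E) (s : Set E), LipschitzWith δ u → MeasurableSet s →
      EqOn u 0 sᶜ → ∫ x in s, (1 - fderiv ℝ u x).det ∂μ = μ.real s := by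
  have hdet : ∀ᶠ A in 𝓝 (0 : E →L[ℝ] E), 0 < (1 - A).det := by
    refine (ContinuousLinearMap.continuous_det.comp
      (continuous_const.sub continuous_id)).continuousAt.eventually (lt_mem_nhds ?_)
    simp [ContinuousLinearMap.det]
  obtain ⟨ε, hε, hεdet⟩ := Metric.eventually_nhds_iff.1 hdet
  filter_upwards [gt_mem_nhds (zero_lt_one' ℝ≥0), gt_mem_nhds (Real.toNNReal_pos.2 hε)]
    with δ hδ1 hδε u s hu hs hus
  set ψ : E → E := fun x ↦ x - u x
  have hψ : LipschitzWith (1 + δ) ψ := LipschitzWith.id.sub hu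
  have hψbij : Function.Bijective ψ := bijective_sub_of_lipschitz hu hδ1
  have himage : ψ '' s = s := by
    have hcompl : ψ '' sᶜ = sᶜ := by
      simpa using image_congr (f := ψ) (g := id) fun x hx ↦ by simp [ψ, hus hx]
    rwa [image_compl_eq hψbij, compl_inj_iff] at hcompl
  have hpos (x : E) : 0 < (1 - fderiv ℝ u x).det := by
    refine hεdet ?_
    rw [dist_zero_right]
    exact (norm_fderiv_le_of_lipschitz ℝ hu).trans_lt (Real.lt_toNNReal_iff_coe_lt.1 hδε)
  have hmeas : Measurable fun x ↦ (1 - fderiv ℝ u x).det :=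
    (ContinuousLinearMap.continuous_det.comp (continuous_const.sub continuous_id)).measurable.comp
      (measurable_fderiv ℝ u)
  rw [integral_eq_lintegral_of_nonneg_ae (Eventually.of_forall fun x ↦ (hpos x).le)
    hmeas.aestronglyMeasurable, measureReal_def]
  congr 1
  conv_rhs => rw [← himage,
    ← lintegral_abs_det_fderiv_eq_addHaar_image_of_lipschitz μ hψ hs hψbij.1.injOn]
  refine lintegral_congr_ae (ae_restrict_of_ae ?_)
  filter_upwards [hu.ae_differentiableAt (μ := μ)] with x hx
  rw [fderiv_fun_sub differentiableAt_fun_id hx, fderiv_fun_id]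
  exact congrArg ENNReal.ofReal (abs_of_pos (hpos x)).symm

lemma eventually_integral_det_smul_one_sub_fderiv_eq {K : ℝ≥0} {u : E → E}
    (hu : LipschitzWith K u) {s : Set E} (hs : MeasurableSet s) (hus : EqOn u 0 sᶜ) :
    ∀ᶠ t : ℝ in atTop, ∫ x in s, (t • (1 : E →L[ℝ] E) - fderiv ℝ u x).det ∂μ =
      t ^ finrank ℝ E * μ.real s := by
  have htendsto : Tendsto (fun t : ℝ ↦ ‖t⁻¹‖₊ * K) atTop (𝓝 0) := by
    simpa using (tendsto_inv_atTop_zero (𝕜 := ℝ)).nnnorm.mul_const K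
  filter_upwards [eventually_gt_atTop 0,
    htendsto.eventually (eventually_integral_det_one_sub_fderiv_eq_measureReal μ)] with t ht hsmall
  have hscale (x : E) : (t • (1 : E →L[ℝ] E) - fderiv ℝ u x).det =
      t ^ finrank ℝ E * (1 - fderiv ℝ (t⁻¹ • u) x).det := by
    have hfactor : t • (1 : E →L[ℝ] E) - fderiv ℝ u x = t • (1 - t⁻¹ • fderiv ℝ u x) := by
      rw [smul_sub, smul_inv_smul₀ ht.ne']
    rw [fderiv_const_smul_field, Pi.smul_apply, hfactor]
    exact LinearMap.det_smul t ((1 - t⁻¹ • fderiv ℝ u x : E →L[ℝ] E) : E →ₗ[ℝ] E)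
  simp_rw [hscale]
  rw [integral_const_mul, hsmall (t⁻¹ • u) s ((lipschitzWith_smul t⁻¹).comp hu) hs
    fun x hx ↦ by simp [hus hx]]

variable {μ}

theorem integral_det_fderiv_eq_measureReal_of_lipschitz {K : ℝ≥0} {ψ : E → E}
    (hψ : LipschitzWith K ψ) {s : Set E} (hs : MeasurableSet s) (hμs : μ s ≠ ∞)
    (hid : EqOn ψ id sᶜ) : ∫ x in s, (fderiv ℝ ψ x).det ∂μ = μ.real s := by
  set u : E → E := fun x ↦ x - ψ x
  have hu : LipschitzWith (1 + K) u := LipschitzWith.id.sub hψ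
  have hus : EqOn u 0 sᶜ := fun x hx ↦ by simp [u, hid hx]
  obtain ⟨p, hp⟩ := exists_polynomial_eval_eq_integral_det_smul_one_sub_fderiv hu hμs
  obtain ⟨T, hT⟩ :=
    eventually_atTop.1 (eventually_integral_det_smul_one_sub_fderiv_eq μ hu hs hus)
  have hpoly : p = X ^ finrank ℝ E * C (μ.real s) := by
    refine eq_of_infinite_eval_eq _ _ ((Ici_infinite T).mono fun t ht ↦ ?_)
    simp only [mem_ofPred_eq, hp, hT t ht, eval_mul, eval_pow, eval_X, eval_C]
  calc ∫ x in s, (fderiv ℝ ψ x).det ∂μ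
      = ∫ x in s, ((1 : ℝ) • (1 : E →L[ℝ] E) - fderiv ℝ u x).det ∂μ := by
        refine integral_congr_ae (ae_restrict_of_ae ?_)
        filter_upwards [hψ.ae_differentiableAt (μ := μ)] with x hx
        rw [fderiv_fun_sub differentiableAt_fun_id hx, fderiv_fun_id, one_smul]
        simp [ContinuousLinearMap.one_def]
    _ = μ.real s := by rw [← hp, hpoly]; simp

lemma measureReal_ball_le_of_det_fderiv_eq_zero {K : ℝ≥0} {C : ℝ}
    (hC : ∀ A : E →L[ℝ] E, ‖A‖ ≤ lipschitzExtensionConstant E * (K + 2) → |A.det| ≤ C)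
    {φ : E → E} (hφ : LipschitzWith K φ) {x₀ : E} {σ ρ : ℝ} (hσρ : σ ≤ ρ)
    (hclose : ∀ x ∈ ball x₀ σ, dist (φ x) x ≤ ρ - σ)
    (hdet : ∀ᵐ x ∂μ.restrict (ball x₀ σ), (fderiv ℝ φ x).det = 0) :
    μ.real (ball x₀ ρ) ≤ C * (μ.real (ball x₀ ρ) - μ.real (ball x₀ σ)) := by
  obtain ⟨ψ, hψ, hψφ, hψid⟩ := exists_lipschitz_eqOn_ball_eqOn_compl_ball hφ hclose
  have hinner : ∫ x in ball x₀ σ, (fderiv ℝ ψ x).det ∂μ = 0 := by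
    refine integral_eq_zero_of_ae ?_
    filter_upwards [hdet, ae_restrict_mem measurableSet_ball] with x hx hxσ
    rw [(hψφ.eventuallyEq_of_mem (isOpen_ball.mem_nhds hxσ)).fderiv_eq, hx, Pi.zero_apply]
  have hint : IntegrableOn (fun x ↦ (fderiv ℝ ψ x).det) (ball x₀ ρ) μ :=
    integrableOn_comp_fderiv_of_lipschitz hψ ContinuousLinearMap.continuous_det
      measure_ball_lt_top.ne
  calc μ.real (ball x₀ ρ) = ∫ x in ball x₀ ρ, (fderiv ℝ ψ x).det ∂μ :=
        (integral_det_fderiv_eq_measureReal_of_lipschitz hψ measurableSet_ball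
          measure_ball_lt_top.ne hψid).symm
    _ = ∫ x in ball x₀ ρ \ ball x₀ σ, (fderiv ℝ ψ x).det ∂μ := by
        rw [← integral_inter_add_sdiff measurableSet_ball hint,
          inter_eq_self_of_subset_right (ball_subset_ball hσρ), hinner, zero_add]
    _ ≤ C * μ.real (ball x₀ ρ \ ball x₀ σ) :=
        (Real.le_norm_self _).trans <| norm_setIntegral_le_of_norm_le_const
          ((measure_mono sdiff_subset).trans_lt measure_ball_lt_top) fun x _ ↦
            hC _ (mod_cast norm_fderiv_le_of_lipschitz ℝ hψ)
    _ = C * (μ.real (ball x₀ ρ) - μ.real (ball x₀ σ)) := by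
        rw [measureReal_sdiff (ball_subset_ball hσρ) measurableSet_ball
          measure_ball_lt_top.ne]

variable (μ) in
theorem exists_forall_frequently_det_fderiv_ne_zero (K : ℝ≥0) :
    ∃ ε > 0, ∀ (φ : E → E) (x₀ : E) (ρ : ℝ), LipschitzWith K φ → 0 < ρ →
      (∀ x ∈ ball x₀ ρ, dist (φ x) x ≤ ε * ρ) →
      ∃ᵐ x ∂μ.restrict (ball x₀ ρ), (fderiv ℝ φ x).det ≠ 0 := by
  have := FiniteDimensional.proper ℝ (E →L[ℝ] E)
  obtain ⟨C, hC⟩ := (isCompact_closedBall (0 : E →L[ℝ] E)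
    (lipschitzExtensionConstant E * (K + 2))).exists_bound_of_continuousOn
    ContinuousLinearMap.continuous_det.continuousOn
  have hsmall : ∀ᶠ ε : ℝ in 𝓝 0, C * (1 - (1 - ε) ^ finrank ℝ E) < 1 :=
    (Continuous.tendsto' (by fun_prop) 0 0 (by simp)).eventually (gt_mem_nhds one_pos)
  obtain ⟨ε, hε, hεC, hε1⟩ := (hsmall.and (gt_mem_nhds one_pos)).exists_gt
  refine ⟨ε, hε, fun φ x₀ ρ hφ hρ hclose hdet ↦ ?_⟩
  simp only [ne_eq, not_not] at hdet
  have hσρ : (1 - ε) * ρ ≤ ρ := mul_le_of_le_one_left hρ.le (by linarith)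
  have hball : ball x₀ ((1 - ε) * ρ) ⊆ ball x₀ ρ := ball_subset_ball hσρ
  have hμball : μ.real (ball x₀ ((1 - ε) * ρ)) = (1 - ε) ^ finrank ℝ E * μ.real (ball x₀ ρ) := by
    rw [measureReal_def, addHaar_ball_mul_of_pos μ x₀ (sub_pos.2 hε1), ENNReal.toReal_mul,
      ENNReal.toReal_ofReal (pow_nonneg (sub_nonneg.2 hε1.le) _), measureReal_def,
      addHaar_ball_center μ x₀]
  have hle := measureReal_ball_le_of_det_fderiv_eq_zero (μ := μ) (C := C)
    (fun A hA ↦ hC A (by simpa using hA)) hφ hσρ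
    (fun x hx ↦ (hclose x (hball hx)).trans_eq (by ring))
    (ae_mono (restrict_mono_set μ hball) hdet)
  have hpos : 0 < μ.real (ball x₀ ρ) :=
    ENNReal.toReal_pos (measure_ball_pos μ x₀ hρ).ne' measure_ball_lt_top.ne
  rw [hμball] at hle
  nlinarith

end Lipschitz

section Submersion

lemma ae_ae_add_of_ae {X F : Type*} [MeasurableSpace X] [AddGroup F] [MeasurableSpace F]
    [MeasurableAdd₂ F] {ν : Measure X} [SFinite ν] {μ : Measure F} [SFinite μ]
    [μ.IsAddLeftInvariant] {g : X → F} (hg : Measurable g) {p : F → Prop} (hp : ∀ᵐ y ∂μ, p y) :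
    ∀ᵐ v ∂μ, ∀ᵐ x ∂ν, p (g x + v) := by
  have hqmp : QuasiMeasurePreserving (fun z : F × X ↦ g z.2 + z.1) (μ.prod ν) μ :=
    QuasiMeasurePreserving.prod_of_left ((hg.comp measurable_snd).add measurable_fst)
      (Eventually.of_forall fun x ↦ (measurePreserving_add_left μ (g x)).quasiMeasurePreserving)
  exact ae_ae_of_ae_prod (hqmp.ae hp)

variable {E F : Type*} [NormedAddCommGroup E] [NormedSpace ℝ E] [NormedAddCommGroup F]
  {f : F → E} {g : E → F} {x₀ : E}

lemma eventually_forall_ball_dist_le_of_hasFDerivAt_id {φ : E → E}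
    (h : HasFDerivAt φ (ContinuousLinearMap.id ℝ E) x₀) {ε : ℝ} (hε : 0 < ε) :
    ∀ᶠ ρ in 𝓝[>] (0 : ℝ), ∀ x ∈ ball x₀ ρ, dist (φ x - (φ x₀ - x₀)) x ≤ ε * ρ := by
  obtain ⟨δ, hδ, hball⟩ := Metric.eventually_nhds_iff_ball.1 (h.isLittleO.def hε)
  filter_upwards [Ioo_mem_nhdsGT hδ] with ρ hρ x hx
  calc dist (φ x - (φ x₀ - x₀)) x = ‖φ x - φ x₀ - (x - x₀)‖ := by
        rw [dist_eq_norm]; congr 1; abel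
    _ ≤ ε * ‖x - x₀‖ := hball x (ball_subset_ball hρ.2.le hx)
    _ ≤ ε * ρ := by gcongr; exact (mem_ball_iff_norm.1 hx).le

variable [FiniteDimensional ℝ E] {Kf Kg : ℝ≥0}

lemma eventually_eventually_frequently_det_fderiv_comp_add_ne_zero [MeasurableSpace E]
    [BorelSpace E] (ν : Measure E) [ν.IsAddHaarMeasure]
    (hf : LipschitzWith Kf f) (hg : LipschitzWith Kg g)
    (h : HasFDerivAt (f ∘ g) (ContinuousLinearMap.id ℝ E) x₀) :
    ∀ᶠ ρ in 𝓝[>] (0 : ℝ), ∀ᶠ v in 𝓝 (0 : F), ∃ᵐ x ∂ν.restrict (ball x₀ ρ),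
      (fderiv ℝ (fun x ↦ f (g x + v)) x).det ≠ 0 := by
  obtain ⟨ε, hε, hdet⟩ := exists_forall_frequently_det_fderiv_ne_zero ν (Kf * Kg)
  filter_upwards [eventually_forall_ball_dist_le_of_hasFDerivAt_id h (half_pos hε),
    self_mem_nhdsWithin] with ρ hclose hρ
  have hsmall : ∀ᶠ v : F in 𝓝 0, Kf * ‖v‖ < ε / 2 * ρ :=
    (Continuous.tendsto' (by fun_prop) 0 0 (by simp)).eventually
      (gt_mem_nhds (mul_pos (half_pos hε) hρ))
  filter_upwards [hsmall] with v hv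
  set c : E := f (g x₀) - x₀
  have hlip : LipschitzWith (Kf * Kg) fun x ↦ f (g x + v) - c := by
    simpa using (hf.comp (hg.add (LipschitzWith.const v))).sub (LipschitzWith.const c)
  have hnear : ∀ x ∈ ball x₀ ρ, dist (f (g x + v) - c) x ≤ ε * ρ := fun x hx ↦
    calc dist (f (g x + v) - c) x ≤ dist (f (g x + v)) (f (g x)) + dist (f (g x) - c) x := by
          simpa only [dist_sub_right] using dist_triangle (f (g x + v) - c) (f (g x) - c) x
      _ ≤ ε / 2 * ρ + ε / 2 * ρ := by
          refine add_le_add ((hf.dist_le_mul _ _).trans ?_) (hclose x hx)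
          simpa using hv.le
      _ = ε * ρ := by ring
  simpa only [fderiv_sub_const] using hdet _ x₀ ρ hlip hρ hnear

variable [NormedSpace ℝ F]

lemma surjective_fderiv_of_det_fderiv_comp_ne_zero {x : E}
    (hf : DifferentiableAt ℝ f (g x)) (hg : DifferentiableAt ℝ g x)
    (hdet : (fderiv ℝ (f ∘ g) x).det ≠ 0) : Function.Surjective (fderiv ℝ f (g x)) := by
  rw [fderiv_comp x hf hg] at hdet
  exact Function.Surjective.of_comp (g := fderiv ℝ g x)
    (LinearMap.equivOfDetNeZero _ hdet).surjective

theorem frequently_surjective_fderiv_of_hasFDerivAt_comp_id [FiniteDimensional ℝ F]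
    [MeasurableSpace F] [BorelSpace F] (μ : Measure F) [μ.IsAddHaarMeasure]
    (hf : LipschitzWith Kf f) (hg : LipschitzWith Kg g)
    (h : HasFDerivAt (f ∘ g) (ContinuousLinearMap.id ℝ E) x₀) {V : Set F} (hV : V ∈ 𝓝 (g x₀)) :
    ∃ᵐ y ∂μ, y ∈ V ∧ Function.Surjective (fderiv ℝ f y) := by
  borelize E
  let ν : Measure E := addHaar
  have hmem : ∀ᶠ z : E × F in 𝓝 x₀ ×ˢ 𝓝 0, g z.1 + z.2 ∈ V := by
    rw [← nhds_prod_eq]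
    have hcont : Continuous fun z : E × F ↦ g z.1 + z.2 :=
      (hg.continuous.comp continuous_fst).add continuous_snd
    exact hcont.tendsto' (x₀, 0) (g x₀) (by simp) hV
  obtain ⟨p, hp, q, hq, hpq⟩ := eventually_prod_iff.1 hmem
  obtain ⟨δ, hδ, hδp⟩ := Metric.eventually_nhds_iff_ball.1 hp
  obtain ⟨ρ, hdet, -, hρδ⟩ := ((eventually_eventually_frequently_det_fderiv_comp_add_ne_zero ν
    hf hg h).and (Ioo_mem_nhdsGT hδ)).exists
  intro hnot
  have hae : ∀ᵐ v ∂μ, ∀ᵐ x ∂ν, DifferentiableAt ℝ f (g x + v) ∧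
      ¬(g x + v ∈ V ∧ Function.Surjective (fderiv ℝ f (g x + v))) :=
    ae_ae_add_of_ae hg.continuous.measurable (hf.ae_differentiableAt.and hnot)
  obtain ⟨v, hv, hdetv, hqv⟩ := (dense_of_ae hae).inter_nhds_nonempty (hdet.and hq)
  refine hdetv ?_
  filter_upwards [ae_restrict_mem measurableSet_ball, ae_restrict_of_ae hv,
    ae_restrict_of_ae hg.ae_differentiableAt] with x hxρ ⟨hfx, hnotx⟩ hgx hdetx
  exact hnotx ⟨hpq (hδp x (ball_subset_ball hρδ.le hxρ)) hqv,
    surjective_fderiv_of_det_fderiv_comp_ne_zero (g := fun x ↦ g x + v) hfx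
      (hgx.add_const v) hdetx⟩

theorem frequently_surjective_fderiv_of_lipschitzOnWith [FiniteDimensional ℝ F]
    [MeasurableSpace F] [BorelSpace F] (μ : Measure F) [μ.IsAddHaarMeasure] {U : Set F} {Ω : Set E}
    (hf : LipschitzOnWith Kf f U) (hg : LipschitzOnWith Kg g Ω) (hΩ : Ω ∈ 𝓝 x₀) (hU : U ∈ 𝓝 (g x₀))
    (h : HasFDerivAt (f ∘ g) (ContinuousLinearMap.id ℝ E) x₀) :
    ∃ᵐ y ∂μ, y ∈ interior U ∧ Function.Surjective (fderiv ℝ f y) := by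
  obtain ⟨f', hf', hff'⟩ := hf.extend_finite_dimension
  obtain ⟨g', hg', hgg'⟩ := hg.extend_finite_dimension
  have hgU : ∀ᶠ x in 𝓝 x₀, g x ∈ U := (hg.continuousOn.continuousAt hΩ).eventually hU
  have hcomp : f' ∘ g' =ᶠ[𝓝 x₀] f ∘ g := by
    filter_upwards [hΩ, hgU] with x hxΩ hxU
    rw [Function.comp_apply, Function.comp_apply, ← hgg' hxΩ, hff' hxU]
  have hV : interior U ∈ 𝓝 (g' x₀) := by
    rw [← hgg' (mem_of_mem_nhds hΩ)]
    exact interior_mem_nhds.2 hU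
  refine (frequently_surjective_fderiv_of_hasFDerivAt_comp_id μ hf' hg'
    (h.congr_of_eventuallyEq hcomp) hV).mono fun y ⟨hyU, hy⟩ ↦ ⟨hyU, ?_⟩
  rwa [(hff'.eventuallyEq_of_mem (mem_interior_iff_mem_nhds.1 hyU)).fderiv_eq]

end Submersion

section Rank

variable {E F G : Type*} [NormedAddCommGroup E] [NormedSpace ℝ E] [NormedAddCommGroup F]
  [NormedSpace ℝ F] [FiniteDimensional ℝ F] [NormedAddCommGroup G] [NormedSpace ℝ G]

lemma exists_comp_comp_eq_id_range (L : E →L[ℝ] G) [FiniteDimensional ℝ L.range] :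
    ∃ (A : L.range →L[ℝ] E) (P : G →L[ℝ] L.range),
      P ∘L L ∘L A = ContinuousLinearMap.id ℝ L.range := by
  obtain ⟨P, hP⟩ := Submodule.ClosedComplemented.of_finiteDimensional L.range
  obtain ⟨A, hA⟩ := L.rangeRestrict.exists_rightInverse_of_surjective
    (by rw [L.toLinearMap_rangeRestrict, LinearMap.range_rangeRestrict])
  refine ⟨A, P, ContinuousLinearMap.ext fun z ↦ ?_⟩
  have hLA : L (A z) = z := congrArg Subtype.val (DFunLike.congr_fun hA z)
  simp [hLA, hP z]

lemma finrank_le_derivRank_of_surjective_comp {f : F → G} {y : F} (P : G →L[ℝ] E)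
    (hP : Function.Surjective (P ∘L fderiv ℝ f y)) : finrank ℝ E ≤ derivRank f y := by
  have htop : (fderiv ℝ f y).range.map (P : G →ₗ[ℝ] E) = ⊤ := by
    rw [← LinearMap.range_comp]
    exact LinearMap.range_eq_top.2 hP
  rw [← finrank_top, ← htop]
  exact Submodule.finrank_map_le _ _

theorem ae_rank_comp_le_general [FiniteDimensional ℝ G] [MeasurableSpace F] [BorelSpace F]
    {μ : Measure F} [μ.IsAddHaarMeasure] {f : F → G} {g : E → F} {x : E} {Kf Kg : ℝ≥0} {r : ℕ}
    {U : Set F} {Ω : Set E} (hf : LipschitzOnWith Kf f U) (hg : LipschitzOnWith Kg g Ω)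
    (hΩ : Ω ∈ 𝓝 x) (hU : U ∈ 𝓝 (g x)) (hrank : ∀ᵐ y ∂μ, y ∈ U → derivRank f y ≤ r)
    (hdiff : DifferentiableAt ℝ (f ∘ g) x) : derivRank (f ∘ g) x ≤ r := by
  obtain ⟨A, P, hPA⟩ := exists_comp_comp_eq_id_range (fderiv ℝ (f ∘ g) x)
  set a : (fderiv ℝ (f ∘ g) x).range → E := fun z ↦ x + A z
  have ha : LipschitzWith ‖A‖₊ a := by
    simpa using (LipschitzWith.const x).add A.lipschitz
  have ha0 : a 0 = x := by simp [a]
  have hderiv : HasFDerivAt ((P ∘ f) ∘ g ∘ a) (ContinuousLinearMap.id ℝ _) 0 := by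
    have hfg : HasFDerivAt (f ∘ g) (fderiv ℝ (f ∘ g) x) (a 0) := by
      rw [ha0]
      exact hdiff.hasFDerivAt
    rw [← hPA]
    exact P.hasFDerivAt.comp 0 (hfg.comp 0 (A.hasFDerivAt.const_add x))
  have hsurj := frequently_surjective_fderiv_of_lipschitzOnWith μ
    (P.lipschitz.comp_lipschitzOnWith hf)
    (hg.comp (ha.lipschitzOnWith (s := a ⁻¹' Ω)) (mapsTo_preimage a Ω))
    (ha.continuous.continuousAt.preimage_mem_nhds (by rwa [ha0])) (by simpa [ha0] using hU) hderiv
  obtain ⟨y, ⟨hyU, hy⟩, hrank_y, hdiff_y⟩ :=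
    (hsurj.and_eventually (hrank.and hf.ae_differentiableWithinAt_of_mem)).exists
  have hyU' : U ∈ 𝓝 y := mem_interior_iff_mem_nhds.1 hyU
  have hfy : DifferentiableAt ℝ f y := (hdiff_y (interior_subset hyU)).differentiableAt hyU'
  rw [fderiv_comp y P.differentiableAt hfy, P.fderiv] at hy
  exact (finrank_le_derivRank_of_surjective_comp P hy).trans (hrank_y (interior_subset hyU))

end Rank

/-- If `g : Ω → U` and `f : U → ℝᵏ` are Lipschitz and `rank Df ≤ r` a.e. in `U`, then
`rank D(f∘g) ≤ r` a.e. in `Ω`. -/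
theorem ae_rank_comp_le {n m k r : ℕ}
    (Ω : Set (EuclideanSpace ℝ (Fin n))) (U : Set (EuclideanSpace ℝ (Fin m)))
    (hΩ : IsOpen Ω) (hU : IsOpen U)
    (g : EuclideanSpace ℝ (Fin n) → EuclideanSpace ℝ (Fin m))
    (f : EuclideanSpace ℝ (Fin m) → EuclideanSpace ℝ (Fin k))
    (Kg Kf : ℝ≥0) (hg : LipschitzOnWith Kg g Ω) (hgU : ∀ x ∈ Ω, g x ∈ U)
    (hf : LipschitzOnWith Kf f U)
    (hrank : ∀ᵐ y ∂(volume : Measure (EuclideanSpace ℝ (Fin m))), y ∈ U →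
      derivRank f y ≤ r) :
    ∀ᵐ x ∂(volume : Measure (EuclideanSpace ℝ (Fin n))), x ∈ Ω →
      derivRank (f ∘ g) x ≤ r := by
  filter_upwards [(hf.comp hg hgU).ae_differentiableWithinAt_of_mem] with x hdiff hx
  exact ae_rank_comp_le_general hf hg (hΩ.mem_nhds hx) (hU.mem_nhds (hgU x hx)) hrank
    ((hdiff hx).differentiableAt (hΩ.mem_nhds hx))
end
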